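/- arXiv:2108.00060 — 2 statements merged into one kernel-verified Lean document; each statement's English description precedes it below -/
import Mathlib

section
/- (Filtered Baker–Campbell–Hausdorff) Given F ∈ 𝓕^{≥d₁} and G ∈ 𝓕^{≥d₂} with d₁, d₂ ≥ 1, there exists K ∈ 𝓕^{≥1} such that e^{{G,·}} ∘ e^{{F,·}} = e^{{K,·}} as operators on 𝓕, and moreover K − F − G ∈ 𝓕^{≥ d₁+d₂}. -/
open scoped BigOperators ENNReal

/-- The index set `ℕ^ℤ_f`: finitely supported functions `ℤ → ℕ`. -/
abbrev Idx : Type := ℤ →₀ ℕ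

/-- Coefficient families of formal Hamiltonians. -/
abbrev Coeffs : Type := Idx → Idx → ℂ

/-- `|α| = ∑_j α_j`. -/
def wt (α : Idx) : ℕ := α.sum fun _ n => n

/-- The momentum `π(α,β) = ∑_j j (α_j - β_j)`. -/
def mom (α β : Idx) : ℤ := (α.sum fun j n => j * (n : ℤ)) - (β.sum fun j n => j * (n : ℤ))

/-- Membership in the space `𝓕` of formal Hamiltonians: vanishing of the
constant and linear coefficients, reality and momentum conservation. -/
def InF (H : Coeffs) : Prop :=
  H 0 0 = 0 ∧ H (Finsupp.single 0 1) 0 = 0 ∧ H 0 (Finsupp.single 0 1) = 0 ∧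
    (∀ α β, H α β = (starRingEnd ℂ) (H β α)) ∧ (∀ α β, mom α β ≠ 0 → H α β = 0)

/-- Membership in `𝓕^{≥d}`: supported on pairs with `|α|+|β| ≥ d+2`. -/
def InFge (d : ℕ) (H : Coeffs) : Prop :=
  InF H ∧ ∀ α β, wt α + wt β < d + 2 → H α β = 0

/-- A single term of the Poisson-bracket double sum `{F,G}_{α,β}`, indexed by
`x = (j, ((α¹,β¹), (α²,β²)))`: it is
`F_{α¹,β¹} G_{α²,β²} (α¹_j β²_j − β¹_j α²_j)` when `π(α¹,β¹) = π(α²,β²) = 0`,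
`α = α¹+α²−e_j` and `β = β¹+β²−e_j`, and `0` otherwise. -/
noncomputable def bracketTerm (F G : Coeffs) (α β : Idx)
    (x : ℤ × (Idx × Idx) × (Idx × Idx)) : ℂ :=
  if mom x.2.1.1 x.2.1.2 = 0 ∧ mom x.2.2.1 x.2.2.2 = 0 ∧
      α = x.2.1.1 + x.2.2.1 - Finsupp.single x.1 1 ∧
      β = x.2.1.2 + x.2.2.2 - Finsupp.single x.1 1 then
    F x.2.1.1 x.2.1.2 * G x.2.2.1 x.2.2.2 *
      ((x.2.1.1 x.1 : ℂ) * (x.2.2.2 x.1 : ℂ) - (x.2.1.2 x.1 : ℂ) * (x.2.2.1 x.1 : ℂ))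
  else 0

/-- The Poisson bracket `{F,G}`, defined coefficientwise by
`{F,G}_{α,β} = i ∑_x bracketTerm F G α β x` (a sum with finitely many
nonzero terms, so the `finsum` gives the intended value). -/
noncomputable def bracket (F G : Coeffs) : Coeffs := fun α β =>
  Complex.I * ∑ᶠ x : ℤ × (Idx × Idx) × (Idx × Idx), bracketTerm F G α β x

/-- Iterates `ad_G^k`. -/
noncomputable def adPow (G : Coeffs) : ℕ → Coeffs → Coeffs
  | 0, H => H
  | k + 1, H => bracket G (adPow G k H)

/-- The formal symplectic change of variables `e^{{G,·}} = ∑_{k≥0} ad_G^k / k!`;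
for `G ∈ 𝓕^{≥1}` each coefficient receives only finitely many nonzero
contributions, so the `finsum` gives the intended value. -/
noncomputable def expAd (G H : Coeffs) : Coeffs := fun α β =>
  ∑ᶠ k : ℕ, ((k.factorial : ℂ))⁻¹ * adPow G k H α β

/-!
Let `L` be a complete filtered Lie algebra with a derivation `deg` that acts on the `n`-th graded
piece as `n`. Conjugating `deg` by `e^{ad K}` gives `deg - ad (W K)`, where
`W K = ∑ k, ad_K ^ k (deg K) / (k + 1)!`. Because `deg` is invertible on every graded piece of
positive degree, `e^{ad K}` is determined by `W K`, and `W` is a bijection of `fil 1` onto itself.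
Conjugation by `e^{ad G} ∘ e^{ad F}` gives `deg - ad (W G + e^{ad G} (W F))`, so the composition is
`e^{ad K}` for the `K` with `W K = W G + e^{ad G} (W F)`. Modulo `fil (a + b)` both this element and
`W (F + G)` agree with `W F + W G`, hence `K` agrees with `F + G`.

For formal Hamiltonians `deg` multiplies the coefficient of `(α, β)` by `|α| + |β| - 2`. The Jacobi
identity is a limit of Jacobi identities in finitely many modes: by conservation of momentum only
finitely many modes contribute to a given coefficient.
-/

/-- A complete separated decreasing filtration `fil` of a Lie algebra, compatible with the bracket,
together with an Euler derivation `deg` that acts on the `n`-th graded piece `fil n / fil (n + 1)`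
as multiplication by `n`. -/
structure EulerFiltration (𝕜 L : Type*) [Field 𝕜] [LieRing L] [LieAlgebra 𝕜 L] where
  fil : ℕ → Submodule 𝕜 L
  antitone_fil : Antitone fil
  fil_zero : fil 0 = ⊤
  eq_zero_of_forall_mem : ∀ x, (∀ n, x ∈ fil n) → x = 0
  lie_mem : ∀ {a b x y}, x ∈ fil a → y ∈ fil b → ⁅x, y⁆ ∈ fil (a + b)
  exists_sum : ∀ u : ℕ → L, (∀ k, u k ∈ fil k) →
    ∃ x, ∀ n, x - ∑ k ∈ Finset.range n, u k ∈ fil n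
  deg : LieDerivation 𝕜 L L
  deg_sub_smul_mem : ∀ {n x}, x ∈ fil n → deg x - (n : 𝕜) • x ∈ fil (n + 1)

namespace EulerFiltration

open Finset

variable {𝕜 L : Type*} [Field 𝕜] [LieRing L] [LieAlgebra 𝕜 L]
  (S : EulerFiltration 𝕜 L)

section Filtration

variable {S} {a b c n : ℕ} {x y : L}

theorem mem_of_le (h : a ≤ b) (hx : x ∈ S.fil b) : x ∈ S.fil a := S.antitone_fil h hx

theorem mem_fil_zero (x : L) : x ∈ S.fil 0 := S.fil_zero ▸ Submodule.mem_top

theorem eq_of_forall_sub_mem (h : ∀ n, x - y ∈ S.fil n) : x = y :=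
  sub_eq_zero.mp (S.eq_zero_of_forall_mem _ h)

theorem lie_mem_of_le (hx : x ∈ S.fil a) (hy : y ∈ S.fil b) (h : c ≤ a + b) : ⁅x, y⁆ ∈ S.fil c :=
  mem_of_le h (S.lie_mem hx hy)

theorem deg_mem (hx : x ∈ S.fil n) : S.deg x ∈ S.fil n := by
  simpa using add_mem (mem_of_le n.le_succ (S.deg_sub_smul_mem hx)) ((S.fil n).smul_mem (n : 𝕜) hx)

theorem mem_succ_of_deg_sub_smul_mem [CharZero 𝕜] {m : ℕ} (hmn : m ≠ n) (hx : x ∈ S.fil n)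
    (h : S.deg x - (m : 𝕜) • x ∈ S.fil (n + 1)) : x ∈ S.fil (n + 1) := by
  have hsub : ((m : 𝕜) - n) • x ∈ S.fil (n + 1) := by
    convert sub_mem (S.deg_sub_smul_mem hx) h using 1
    module
  exact (Submodule.smul_mem_iff _ (sub_ne_zero.mpr (Nat.cast_injective.ne hmn))).mp hsub

end Filtration

section Sums

/-- `x` is the sum of the series `u` in the topology defined by the filtration, with the rate of
convergence of a series whose `k`-th term lies in `fil k`. -/
def IsSum (u : ℕ → L) (x : L) : Prop :=
  ∀ n, x - ∑ k ∈ range n, u k ∈ S.fil n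

/-- The sum of the series `u`, a junk value unless `u k ∈ fil k` for all `k`. -/
noncomputable def sum (u : ℕ → L) : L := Classical.epsilon (S.IsSum u)

variable {S} {u v : ℕ → L} {x y : L}

theorem isSum_sum (hu : ∀ k, u k ∈ S.fil k) : S.IsSum u (S.sum u) :=
  Classical.epsilon_spec (S.exists_sum u hu)

namespace IsSum

theorem unique (hx : S.IsSum u x) (hy : S.IsSum u y) : x = y :=
  eq_of_forall_sub_mem fun n => by simpa using sub_mem (hx n) (hy n)

theorem term_mem (hx : S.IsSum u x) (k : ℕ) : u k ∈ S.fil k := by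
  convert sub_mem (hx k) (mem_of_le k.le_succ (hx (k + 1))) using 1
  rw [sum_range_succ]
  abel

theorem add (hx : S.IsSum u x) (hy : S.IsSum v y) :
    S.IsSum (fun k => u k + v k) (x + y) := fun n => by
  convert add_mem (hx n) (hy n) using 1
  rw [sum_add_distrib]
  abel

theorem sub (hx : S.IsSum u x) (hy : S.IsSum v y) :
    S.IsSum (fun k => u k - v k) (x - y) := fun n => by
  convert sub_mem (hx n) (hy n) using 1
  rw [sum_sub_distrib]
  abel

theorem map {T : Type*} [FunLike T L L] [AddMonoidHomClass T L L] (f : T)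
    (hf : ∀ n, ∀ z ∈ S.fil n, f z ∈ S.fil n) (hx : S.IsSum u x) :
    S.IsSum (fun k => f (u k)) (f x) := fun n => by
  simpa only [map_sub, map_sum] using hf n _ (hx n)

theorem lie (hx : S.IsSum u x) (hy : S.IsSum v y) :
    S.IsSum (fun m => ∑ ij ∈ antidiagonal m, ⁅u ij.1, v ij.2⁆) ⁅x, y⁆ := fun n => by
  have hsplit : ⁅x, y⁆ - ∑ m ∈ range n, ∑ ij ∈ antidiagonal m, ⁅u ij.1, v ij.2⁆ =
      ⁅x - ∑ i ∈ range n, u i, y⁆ + ∑ i ∈ range n, ⁅u i, y - ∑ j ∈ range (n - i), v j⁆ := by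
    simp_rw [Nat.sum_antidiagonal_eq_sum_range_succ (fun i j => ⁅u i, v j⁆), Nat.succ_eq_add_one,
      sum_range_diag_flip n (fun i j => ⁅u i, v j⁆), sub_lie, lie_sub, sum_sub_distrib,
      sum_lie, lie_sum]
    abel
  rw [hsplit]
  refine add_mem (lie_mem_of_le (hx n) (mem_fil_zero y) le_rfl) (sum_mem fun i hi => ?_)
  exact lie_mem_of_le (hx.term_mem i) (hy (n - i)) (by have := mem_range.mp hi; omega)

theorem sub_sum_range_mem {a n : ℕ} (hx : S.IsSum u x) (hu : ∀ k, n ≤ k → u k ∈ S.fil a) :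
    x - ∑ k ∈ range n, u k ∈ S.fil a := by
  have htail : ∑ k ∈ range (n + a), u k - ∑ k ∈ range n, u k ∈ S.fil a := by
    rw [sum_range_add, add_sub_cancel_left]
    exact sum_mem fun k _ => hu _ (Nat.le_add_right n k)
  simpa using add_mem (mem_of_le (Nat.le_add_left a n) (hx (n + a))) htail

end IsSum

end Sums

section AdjointRecursion

variable {K : L} {a u v : ℕ → L}

/-- The `k`-th term `ad_K ^ k / k!` of the exponential series of `ad_K`. -/
noncomputable def expTerm (𝕜 : Type*) [Field 𝕜] [LieAlgebra 𝕜 L] (K : L) (k : ℕ) : L →ₗ[𝕜] L :=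
  (k.factorial : 𝕜)⁻¹ • LieAlgebra.ad 𝕜 L K ^ k

theorem expTerm_zero_apply (K x : L) : expTerm 𝕜 K 0 x = x := by simp [expTerm]

theorem expTerm_succ_apply [CharZero 𝕜] (K x : L) (k : ℕ) :
    (k + 1) • expTerm 𝕜 K (k + 1) x = ⁅K, expTerm 𝕜 K k x⁆ := by
  have hk : ((k + 1 : ℕ) : 𝕜) ≠ 0 := Nat.cast_ne_zero.mpr k.succ_ne_zero
  simp only [expTerm, LinearMap.smul_apply, pow_succ', Module.End.mul_apply, LieAlgebra.ad_apply,
    lie_smul, ← Nat.cast_smul_eq_nsmul 𝕜, smul_smul, Nat.factorial_succ, Nat.cast_mul, mul_inv,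
    mul_inv_cancel_left₀ hk]

variable (𝕜) in
theorem eq_expTerm_apply_of_succ_smul_eq_lie [CharZero 𝕜]
    (hu : ∀ k, (k + 1) • u (k + 1) = ⁅K, u k⁆) (k : ℕ) : u k = expTerm 𝕜 K k (u 0) := by
  induction k with
  | zero => rw [expTerm_zero_apply]
  | succ k ih =>
    have hsmul : (k + 1) • u (k + 1) = (k + 1) • expTerm 𝕜 K (k + 1) (u 0) := by
      rw [hu, expTerm_succ_apply, ← ih]
    simp only [← Nat.cast_smul_eq_nsmul 𝕜] at hsmul
    exact smul_right_injective L (Nat.cast_ne_zero.mpr k.succ_ne_zero : ((k + 1 : ℕ) : 𝕜) ≠ 0) hsmul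

theorem succ_smul_sum_antidiagonal_lie
    (hu : ∀ k, (k + 1) • u (k + 1) = ⁅K, u k⁆ + a k) (hv : ∀ k, (k + 1) • v (k + 1) = ⁅K, v k⁆)
    (m : ℕ) :
    (m + 1) • ∑ ij ∈ antidiagonal (m + 1), ⁅u ij.1, v ij.2⁆ =
      ⁅K, ∑ ij ∈ antidiagonal m, ⁅u ij.1, v ij.2⁆⁆ + ∑ ij ∈ antidiagonal m, ⁅a ij.1, v ij.2⁆ := by
  have hsplit : (m + 1) • ∑ ij ∈ antidiagonal (m + 1), ⁅u ij.1, v ij.2⁆ =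
      ∑ ij ∈ antidiagonal (m + 1), ⁅ij.1 • u ij.1, v ij.2⁆ +
        ∑ ij ∈ antidiagonal (m + 1), ⁅u ij.1, ij.2 • v ij.2⁆ := by
    rw [smul_sum, ← sum_add_distrib]
    refine sum_congr rfl fun ij hij => ?_
    rw [nsmul_lie, lie_nsmul, ← add_nsmul, mem_antidiagonal.mp hij]
  rw [hsplit, Nat.sum_antidiagonal_succ, Nat.sum_antidiagonal_succ']
  simp only [hu, hv, zero_smul, zero_lie, lie_zero, zero_add, lie_sum, add_lie, ← sum_add_distrib]
  refine sum_congr rfl fun ij _ => ?_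
  rw [leibniz_lie K]
  abel

/-- The `k`-th term of the series `logDeriv`. -/
noncomputable def logDerivTerm (K : L) : ℕ → L
  | 0 => 0
  | k + 1 => ((k + 1 : ℕ) : 𝕜)⁻¹ • expTerm 𝕜 K k (S.deg K)

variable [CharZero 𝕜]

theorem logDerivTerm_succ (K : L) (k : ℕ) :
    (k + 1) • S.logDerivTerm K (k + 1) =
      ⁅K, S.logDerivTerm K k⁆ + (Pi.single 0 (S.deg K) : ℕ → L) k := by
  have hcancel (n : ℕ) (x : L) : (n + 1) • ((n + 1 : ℕ) : 𝕜)⁻¹ • x = x := by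
    rw [← Nat.cast_smul_eq_nsmul 𝕜, smul_inv_smul₀ (Nat.cast_ne_zero.mpr n.succ_ne_zero)]
  cases k with
  | zero => simp [logDerivTerm, expTerm_zero_apply]
  | succ k =>
    rw [Pi.single_eq_of_ne k.succ_ne_zero, add_zero]
    simp only [logDerivTerm, lie_smul]
    rw [hcancel, ← expTerm_succ_apply, smul_comm, hcancel]

theorem expTerm_lie (K x y : L) (m : ℕ) :
    expTerm 𝕜 K m ⁅x, y⁆ =
      ∑ ij ∈ antidiagonal m, ⁅expTerm 𝕜 K ij.1 x, expTerm 𝕜 K ij.2 y⁆ := by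
  have hrec := eq_expTerm_apply_of_succ_smul_eq_lie 𝕜 (K := K)
    (u := fun m => ∑ ij ∈ antidiagonal m, ⁅expTerm 𝕜 K ij.1 x, expTerm 𝕜 K ij.2 y⁆) fun m => by
      simpa using succ_smul_sum_antidiagonal_lie (K := K) (a := 0) (u := fun k => expTerm 𝕜 K k x)
        (v := fun k => expTerm 𝕜 K k y) (by simp [expTerm_succ_apply]) (expTerm_succ_apply K y) m
  simpa [expTerm_zero_apply] using (hrec m).symm

theorem expTerm_deg (K x : L) (m : ℕ) :
    expTerm 𝕜 K m (S.deg x) = S.deg (expTerm 𝕜 K m x) -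
      ∑ ij ∈ antidiagonal m, ⁅S.logDerivTerm K ij.1, expTerm 𝕜 K ij.2 x⁆ := by
  have hsingle (m : ℕ) : ∑ ij ∈ antidiagonal m, ⁅(Pi.single 0 (S.deg K) : ℕ → L) ij.1,
      expTerm 𝕜 K ij.2 x⁆ = ⁅S.deg K, expTerm 𝕜 K m x⁆ := by
    cases m <;> simp [Nat.sum_antidiagonal_succ]
  have hrec := eq_expTerm_apply_of_succ_smul_eq_lie 𝕜 (K := K)
    (u := fun m => S.deg (expTerm 𝕜 K m x) -
      ∑ ij ∈ antidiagonal m, ⁅S.logDerivTerm K ij.1, expTerm 𝕜 K ij.2 x⁆) fun m => by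
      rw [smul_sub, succ_smul_sum_antidiagonal_lie (v := fun k => expTerm 𝕜 K k x)
        (S.logDerivTerm_succ K) (expTerm_succ_apply K x), hsingle, ← map_nsmul, expTerm_succ_apply,
        LieDerivation.apply_lie_eq_add, lie_sub]
      abel
  simpa [expTerm_zero_apply, logDerivTerm] using (hrec m).symm

end AdjointRecursion

section Exp

variable {a b k n : ℕ} {K F G x y : L}

theorem ad_pow_mem (hK : K ∈ S.fil a) (hx : x ∈ S.fil b) (k : ℕ) :
    (LieAlgebra.ad 𝕜 L K ^ k) x ∈ S.fil (k * a + b) := by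
  induction k with
  | zero => simpa using hx
  | succ k ih =>
    rw [pow_succ', Module.End.mul_apply, LieAlgebra.ad_apply]
    exact lie_mem_of_le hK ih (by rw [add_one_mul]; omega)

theorem expTerm_mem (hK : K ∈ S.fil a) (hx : x ∈ S.fil b) (h : n ≤ k * a + b) :
    expTerm 𝕜 K k x ∈ S.fil n :=
  mem_of_le h (Submodule.smul_mem _ _ (S.ad_pow_mem hK hx k))

variable {S}

theorem isSum_sum_expTerm (hK : K ∈ S.fil 1) (x : L) :
    S.IsSum (fun k => expTerm 𝕜 K k x) (S.sum fun k => expTerm 𝕜 K k x) :=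
  isSum_sum fun _ => S.expTerm_mem hK (mem_fil_zero x) (by omega)

variable (S) in
/-- The operator `e^{ad_K}` for `K ∈ fil 1`. -/
noncomputable def exp (hK : K ∈ S.fil 1) : L →ₗ[𝕜] L where
  toFun x := S.sum fun k => expTerm 𝕜 K k x
  map_add' x y := (isSum_sum_expTerm hK (x + y)).unique <| by
    simpa only [map_add] using (isSum_sum_expTerm hK x).add (isSum_sum_expTerm hK y)
  map_smul' c x := (isSum_sum_expTerm hK (c • x)).unique <| by
    simp only [map_smul]
    exact (isSum_sum_expTerm hK x).map (DistribSMul.toAddMonoidHom L c) fun _ _ =>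
      Submodule.smul_mem _ c

theorem isSum_exp (hK : K ∈ S.fil 1) (x : L) :
    S.IsSum (fun k => expTerm 𝕜 K k x) (S.exp hK x) := isSum_sum_expTerm hK x

theorem exp_sub_self_mem (hK : K ∈ S.fil 1) (hKa : K ∈ S.fil a) (hx : x ∈ S.fil b) :
    S.exp hK x - x ∈ S.fil (a + b) := by
  have htail := (isSum_exp hK x).sub_sum_range_mem (n := 1) fun k hk =>
    S.expTerm_mem (n := a + b) hKa hx (by nlinarith)
  simpa [expTerm_zero_apply] using htail

theorem exp_mem (hK : K ∈ S.fil 1) (hx : x ∈ S.fil n) : S.exp hK x ∈ S.fil n := by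
  simpa using add_mem (mem_of_le (Nat.le_add_left n 1) (exp_sub_self_mem hK hK hx)) hx

variable [CharZero 𝕜]

theorem exp_lie (hK : K ∈ S.fil 1) (x y : L) : S.exp hK ⁅x, y⁆ = ⁅S.exp hK x, S.exp hK y⁆ :=
  (isSum_exp hK _).unique <| by
    simpa only [expTerm_lie] using (isSum_exp hK x).lie (isSum_exp hK y)

end Exp

section LogDeriv

variable {a b k n : ℕ} {K K' F G x y V : L}

theorem logDerivTerm_mem (hK : K ∈ S.fil 1) (hKa : K ∈ S.fil a) (h : n < a + k) :
    S.logDerivTerm K k ∈ S.fil n := by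
  cases k with
  | zero => exact zero_mem _
  | succ k => exact Submodule.smul_mem _ _ (S.expTerm_mem hK (deg_mem hKa) (by omega))

/-- The logarithmic derivative of `e^{ad_K}` along the Euler derivation: the element
`∑ k, ad_K ^ k (deg K) / (k + 1)!`, for which
`e^{ad_K} ∘ deg ∘ e^{-ad_K} = deg - ad (logDeriv K)`. It is meaningful for `K ∈ fil 1`. -/
noncomputable def logDeriv (K : L) : L := S.sum (S.logDerivTerm K)

variable {S}

theorem isSum_logDeriv (hK : K ∈ S.fil 1) : S.IsSum (S.logDerivTerm K) (S.logDeriv K) :=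
  isSum_sum fun _ => S.logDerivTerm_mem hK hK (by omega)

theorem logDeriv_mem (hK : K ∈ S.fil 1) (hKa : K ∈ S.fil a) : S.logDeriv K ∈ S.fil a := by
  simpa [logDerivTerm] using (isSum_logDeriv hK).sub_sum_range_mem (n := 1) fun k hk =>
    S.logDerivTerm_mem (n := a) hK hKa (by omega)

theorem logDeriv_sub_deg_mem (hK : K ∈ S.fil 1) (hKa : K ∈ S.fil a) :
    S.logDeriv K - S.deg K ∈ S.fil (a + 1) := by
  simpa [sum_range_succ, logDerivTerm, expTerm_zero_apply] using
    (isSum_logDeriv hK).sub_sum_range_mem (n := 2) fun k hk =>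
      S.logDerivTerm_mem (n := a + 1) hK hKa (by omega)

theorem exp_deg [CharZero 𝕜] (hK : K ∈ S.fil 1) (x : L) :
    S.exp hK (S.deg x) = S.deg (S.exp hK x) - ⁅S.logDeriv K, S.exp hK x⁆ := by
  have hdeg := (isSum_exp hK x).map S.deg fun _ _ => deg_mem
  have hsum := hdeg.sub ((isSum_logDeriv hK).lie (isSum_exp hK x))
  simp only [← S.expTerm_deg] at hsum
  exact (isSum_exp hK _).unique hsum

theorem ad_pow_add_sub_sub_mem (hF : F ∈ S.fil a) (hG : G ∈ S.fil b) (hx : x ∈ S.fil a)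
    (hy : y ∈ S.fil b) (k : ℕ) :
    (LieAlgebra.ad 𝕜 L (F + G) ^ k) (x + y) - (LieAlgebra.ad 𝕜 L F ^ k) x -
      (LieAlgebra.ad 𝕜 L G ^ k) y ∈ S.fil (a + b) := by
  induction k with
  | zero => simp
  | succ k ih =>
    simp only [pow_succ', Module.End.mul_apply, LieAlgebra.ad_apply]
    set z := (LieAlgebra.ad 𝕜 L (F + G) ^ k) (x + y)
    set x' := (LieAlgebra.ad 𝕜 L F ^ k) x
    set y' := (LieAlgebra.ad 𝕜 L G ^ k) y
    have hFy : ⁅F, y'⁆ ∈ S.fil (a + b) := lie_mem_of_le hF (S.ad_pow_mem hG hy k) (by omega)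
    have hGx : ⁅G, x'⁆ ∈ S.fil (a + b) := lie_mem_of_le hG (S.ad_pow_mem hF hx k) (by omega)
    have hFG : ⁅F + G, z - x' - y'⁆ ∈ S.fil (a + b) :=
      lie_mem_of_le (mem_fil_zero _) ih (by omega)
    convert add_mem (add_mem hFG hFy) hGx using 1
    simp only [add_lie, lie_sub]
    abel

theorem logDeriv_add_sub_sub_mem (hF : F ∈ S.fil 1) (hG : G ∈ S.fil 1) (hFa : F ∈ S.fil a)
    (hGb : G ∈ S.fil b) :
    S.logDeriv (F + G) - S.logDeriv F - S.logDeriv G ∈ S.fil (a + b) := by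
  have hsum := ((isSum_logDeriv (add_mem hF hG)).sub (isSum_logDeriv hF)).sub (isSum_logDeriv hG)
  simpa using hsum.sub_sum_range_mem (n := 0) fun k _ => by
    cases k with
    | zero => simp [logDerivTerm]
    | succ k =>
      simp only [logDerivTerm, expTerm, LinearMap.smul_apply, ← smul_sub, map_add S.deg]
      exact Submodule.smul_mem _ _ <| Submodule.smul_mem _ _ <|
        ad_pow_add_sub_sub_mem hFa hGb (deg_mem hFa) (deg_mem hGb) k

theorem logDeriv_sub_sub_deg_mem (hK : K ∈ S.fil 1) (hK' : K' ∈ S.fil 1)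
    (h : K - K' ∈ S.fil n) :
    S.logDeriv K - S.logDeriv K' - S.deg (K - K') ∈ S.fil (n + 1) := by
  have hadd := logDeriv_add_sub_sub_mem (sub_mem hK hK') hK' h hK'
  rw [sub_add_cancel] at hadd
  convert add_mem hadd (logDeriv_sub_deg_mem (sub_mem hK hK') h) using 1
  abel

theorem logDeriv_sub_mem (hK : K ∈ S.fil 1) (hK' : K' ∈ S.fil 1) (h : K - K' ∈ S.fil n) :
    S.logDeriv K - S.logDeriv K' ∈ S.fil n := by
  simpa using add_mem (mem_of_le n.le_succ (logDeriv_sub_sub_deg_mem hK hK' h)) (deg_mem h)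

variable [CharZero 𝕜]

theorem sub_mem_of_logDeriv_sub_mem (hK : K ∈ S.fil 1) (hK' : K' ∈ S.fil 1)
    (h : S.logDeriv K - S.logDeriv K' ∈ S.fil n) : K - K' ∈ S.fil n := by
  suffices hind : ∀ m ≤ n, K - K' ∈ S.fil m from hind n le_rfl
  intro m
  induction m with
  | zero => exact fun _ => mem_fil_zero _
  | succ m ih =>
    intro hm
    rcases m.eq_zero_or_pos with rfl | hpos
    · exact sub_mem hK hK'
    have hmem := ih (by omega)
    refine mem_succ_of_deg_sub_smul_mem hpos.ne hmem ?_
    simpa using sub_mem (mem_of_le hm h) (logDeriv_sub_sub_deg_mem hK hK' hmem)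

theorem exists_sub_logDeriv_mem (hV : V ∈ S.fil 1) (n : ℕ) :
    ∃ K ∈ S.fil 1, V - S.logDeriv K ∈ S.fil n := by
  induction n with
  | zero => exact ⟨0, zero_mem _, mem_fil_zero _⟩
  | succ n ih =>
    rcases n.eq_zero_or_pos with rfl | hpos
    · exact ⟨0, zero_mem _, sub_mem hV (logDeriv_mem (zero_mem _) (zero_mem _))⟩
    obtain ⟨K, hK, hr⟩ := ih
    set r := V - S.logDeriv K with hr_def
    have hn : (n : 𝕜) ≠ 0 := Nat.cast_ne_zero.mpr hpos.ne'
    have hc : (n : 𝕜)⁻¹ • r ∈ S.fil n := Submodule.smul_mem _ _ hr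
    have hK' : K + (n : 𝕜)⁻¹ • r ∈ S.fil 1 := add_mem hK (mem_of_le hpos hc)
    refine ⟨_, hK', ?_⟩
    have hlog := logDeriv_sub_sub_deg_mem (n := n) hK' hK (by simpa using hc)
    have hdeg := S.deg_sub_smul_mem hc
    rw [smul_inv_smul₀ hn] at hdeg
    rw [add_sub_cancel_left] at hlog
    convert neg_mem (add_mem hlog hdeg) using 1
    rw [hr_def]
    abel

theorem exists_logDeriv_eq (hV : V ∈ S.fil 1) : ∃ K ∈ S.fil 1, S.logDeriv K = V := by
  choose u hu hr using exists_sub_logDeriv_mem (S := S) hV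
  have hstep : ∀ n, u (n + 1) - u n ∈ S.fil n := fun n =>
    sub_mem_of_logDeriv_sub_mem (hu (n + 1)) (hu n) <| by
      simpa using sub_mem (hr n) (mem_of_le n.le_succ (hr (n + 1)))
  obtain ⟨x, hx⟩ := S.exists_sum _ hstep
  have hlim : ∀ n, x + u 0 - u n ∈ S.fil n := fun n => by
    convert hx n using 1
    rw [sum_range_sub]
    abel
  have hK : x + u 0 ∈ S.fil 1 := by simpa using add_mem (hlim 1) (hu 1)
  refine ⟨x + u 0, hK, eq_of_forall_sub_mem (S := S) fun n => ?_⟩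
  simpa using sub_mem (logDeriv_sub_mem hK (hu n) (hlim n)) (hr n)

end LogDeriv

section BakerCampbellHausdorff

variable {S} [CharZero 𝕜] {a b : ℕ} {F G V : L}

theorem eq_zero_of_apply_deg {D : L →ₗ[𝕜] L} (hV : V ∈ S.fil 1)
    (hD : ∀ n, ∀ x ∈ S.fil n, D x ∈ S.fil (n + 1))
    (hdeg : ∀ x, D (S.deg x) = S.deg (D x) - ⁅V, D x⁆) : D = 0 := by
  suffices hind : ∀ k n, ∀ x ∈ S.fil n, D x ∈ S.fil (n + k) from
    LinearMap.ext fun x => S.eq_zero_of_forall_mem _ fun k => by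
      simpa using hind k 0 x (mem_fil_zero x)
  intro k
  induction k with
  | zero => exact fun n x hx => mem_of_le n.le_succ (hD n x hx)
  | succ k ih =>
    intro n x hx
    rcases k.eq_zero_or_pos with rfl | hpos
    · exact hD n x hx
    refine mem_succ_of_deg_sub_smul_mem (m := n) (n := n + k) (by omega) (ih n x hx) ?_
    have hlow : D (S.deg x - (n : 𝕜) • x) ∈ S.fil (n + k + 1) :=
      mem_of_le (by omega) (ih (n + 1) _ (S.deg_sub_smul_mem hx))
    have hlie : ⁅V, D x⁆ ∈ S.fil (n + k + 1) := lie_mem_of_le hV (ih n x hx) (by omega)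
    convert add_mem hlow hlie using 1
    rw [map_sub, map_smul, hdeg]
    abel

theorem exp_comp_exp_eq_of_logDeriv_eq {K : L} (hF : F ∈ S.fil 1) (hG : G ∈ S.fil 1)
    (hK : K ∈ S.fil 1) (hlog : S.logDeriv K = S.logDeriv G + S.exp hG (S.logDeriv F)) :
    S.exp hG ∘ₗ S.exp hF = S.exp hK := by
  refine sub_eq_zero.mp (eq_zero_of_apply_deg (logDeriv_mem hK hK) (fun n x hx => ?_) fun x => ?_)
  · have hFx := exp_sub_self_mem hF hF hx
    have hGx := exp_sub_self_mem hG hG (exp_mem hF hx)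
    have hKx := exp_sub_self_mem hK hK hx
    rw [add_comm n]
    convert sub_mem (add_mem hGx hFx) hKx using 1
    simp only [LinearMap.sub_apply, LinearMap.comp_apply]
    abel
  · simp only [LinearMap.sub_apply, LinearMap.comp_apply, exp_deg, map_sub, exp_lie, lie_sub, hlog,
      add_lie]
    abel

theorem exists_exp_comp_exp_eq (hF : F ∈ S.fil 1) (hG : G ∈ S.fil 1) (hFa : F ∈ S.fil a)
    (hGb : G ∈ S.fil b) :
    ∃ (K : L) (hK : K ∈ S.fil 1), S.exp hG ∘ₗ S.exp hF = S.exp hK ∧ K - F - G ∈ S.fil (a + b) := by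
  obtain ⟨K, hK, hlog⟩ := exists_logDeriv_eq
    (add_mem (logDeriv_mem hG hG) (exp_mem hG (logDeriv_mem hF hF)))
  refine ⟨K, hK, exp_comp_exp_eq_of_logDeriv_eq hF hG hK hlog, ?_⟩
  rw [sub_sub]
  refine sub_mem_of_logDeriv_sub_mem hK (add_mem hF hG) ?_
  have hexp : S.exp hG (S.logDeriv F) - S.logDeriv F ∈ S.fil (a + b) :=
    add_comm b a ▸ exp_sub_self_mem hG hGb (logDeriv_mem hF hFa)
  convert sub_mem hexp (logDeriv_add_sub_sub_mem hF hG hFa hGb) using 1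
  rw [hlog]
  abel

end BakerCampbellHausdorff

end EulerFiltration

namespace PoissonSeries

open MvPowerSeries Filter Topology

variable {σ R : Type*} [CommRing R]

theorem pderiv_comm {τ : Type*} (i k : τ) (f : MvPowerSeries τ R) :
    pderiv R i (pderiv R k f) = pderiv R k (pderiv R i f) := by
  classical
  ext n
  rcases eq_or_ne i k with rfl | hik
  · rfl
  simp only [coeff_pderiv, add_right_comm n, Finsupp.add_apply, Finsupp.single_eq_of_ne hik,
    Finsupp.single_eq_of_ne hik.symm, add_zero]
  ring

/-- The contribution `∂f/∂u_j ∂g/∂ū_j - ∂f/∂ū_j ∂g/∂u_j` of the mode `j` to the Poisson bracket.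
The variable `inl j` stands for `u_j` and `inr j` for `ū_j`. -/
noncomputable def poissonTerm (j : σ) (f g : MvPowerSeries (σ ⊕ σ) R) : MvPowerSeries (σ ⊕ σ) R :=
  pderiv R (Sum.inl j) f * pderiv R (Sum.inr j) g - pderiv R (Sum.inr j) f * pderiv R (Sum.inl j) g

theorem coeff_pderiv_mul_pderiv {τ : Type*} [DecidableEq τ] (i k : τ) (f g : MvPowerSeries τ R)
    (s : τ →₀ ℕ) :
    coeff s (pderiv R i f * pderiv R k g) =
      ∑ p ∈ Finset.HasAntidiagonal.antidiagonal (s + Finsupp.single i 1 + Finsupp.single k 1),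
        coeff p.1 f * coeff p.2 g * (p.1 i * p.2 k) := by
  rw [coeff_mul]
  refine Finset.sum_of_injOn (fun p => (p.1 + Finsupp.single i 1, p.2 + Finsupp.single k 1))
    (fun p _ q _ h => by simpa [Prod.ext_iff] using h) (fun p hp => ?_) (fun p hp hp' => ?_)
    fun p _ => ?_
  · simp only [SetLike.mem_coe, Finset.HasAntidiagonal.mem_antidiagonal] at hp ⊢
    rw [← hp]
    abel
  · have hzero : p.1 i = 0 ∨ p.2 k = 0 := by
      by_contra! hne
      have hi : Finsupp.single i 1 ≤ p.1 :=
        Finsupp.single_le_iff.mpr (Nat.one_le_iff_ne_zero.mpr hne.1)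
      have hk : Finsupp.single k 1 ≤ p.2 :=
        Finsupp.single_le_iff.mpr (Nat.one_le_iff_ne_zero.mpr hne.2)
      refine hp' ⟨(p.1 - Finsupp.single i 1, p.2 - Finsupp.single k 1), ?_,
        Prod.ext (tsub_add_cancel_of_le hi) (tsub_add_cancel_of_le hk)⟩
      simp only [SetLike.mem_coe, Finset.HasAntidiagonal.mem_antidiagonal] at hp ⊢
      refine add_right_cancel (b := Finsupp.single i 1 + Finsupp.single k 1) ?_
      rw [add_add_add_comm, tsub_add_cancel_of_le hi, tsub_add_cancel_of_le hk, hp, add_assoc]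
    rcases hzero with h | h <;> simp [h]
  · simp only [coeff_pderiv, Finsupp.add_apply, Finsupp.single_eq_same, Nat.cast_add, Nat.cast_one]
    ring

theorem coeff_poissonTerm [DecidableEq σ] (j : σ) (f g : MvPowerSeries (σ ⊕ σ) R)
    (s : σ ⊕ σ →₀ ℕ) :
    coeff s (poissonTerm j f g) = ∑ p ∈ Finset.HasAntidiagonal.antidiagonal
        (s + Finsupp.single (Sum.inl j) 1 + Finsupp.single (Sum.inr j) 1),
      coeff p.1 f * coeff p.2 g *
        (p.1 (Sum.inl j) * p.2 (Sum.inr j) - p.1 (Sum.inr j) * p.2 (Sum.inl j)) := by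
  rw [poissonTerm, map_sub, coeff_pderiv_mul_pderiv, coeff_pderiv_mul_pderiv,
    add_right_comm s (Finsupp.single (Sum.inr j) 1), ← Finset.sum_sub_distrib]
  simp only [mul_sub]

section FinitelyManyModes

/-- The Hamiltonian vector field of `f` in the finite set of modes `J`. -/
noncomputable def hamiltonianField (J : Finset σ) (f : MvPowerSeries (σ ⊕ σ) R) :
    Derivation R (MvPowerSeries (σ ⊕ σ) R) (MvPowerSeries (σ ⊕ σ) R) :=
  ∑ j ∈ J, (pderiv R (Sum.inl j) f • pderiv R (Sum.inr j) -
    pderiv R (Sum.inr j) f • pderiv R (Sum.inl j))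

variable (J : Finset σ) (f g h : MvPowerSeries (σ ⊕ σ) R)

theorem hamiltonianField_apply : hamiltonianField J f g = ∑ j ∈ J, poissonTerm j f g := by
  simp only [hamiltonianField, ← Derivation.coeFnAddMonoidHom_apply, map_sum, Finset.sum_apply]
  rfl

/-- The Hessian of `g` contracted with the Hamiltonian vector fields of `f` and `h`. -/
noncomputable def hessianPairing : MvPowerSeries (σ ⊕ σ) R :=
  ∑ k ∈ J, (hamiltonianField J f (pderiv R (Sum.inl k) g) * pderiv R (Sum.inr k) h -
    hamiltonianField J f (pderiv R (Sum.inr k) g) * pderiv R (Sum.inl k) h)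

theorem hessianPairing_swap : hessianPairing J f g h = hessianPairing J h g f := by
  simp only [hessianPairing, hamiltonianField_apply, poissonTerm, Finset.sum_mul,
    ← Finset.sum_sub_distrib]
  rw [Finset.sum_comm]
  refine Finset.sum_congr rfl fun j _ => Finset.sum_congr rfl fun k _ => ?_
  rw [pderiv_comm (Sum.inl k) (Sum.inl j), pderiv_comm (Sum.inl k) (Sum.inr j),
    pderiv_comm (Sum.inr k) (Sum.inl j), pderiv_comm (Sum.inr k) (Sum.inr j)]
  ring

theorem hamiltonianField_hamiltonianField :
    hamiltonianField J f (hamiltonianField J g h) =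
      hessianPairing J f g h - hessianPairing J f h g := by
  simp only [hamiltonianField_apply J g h, poissonTerm, map_sum, map_sub, Derivation.leibniz,
    smul_eq_mul, hessianPairing, ← Finset.sum_sub_distrib]
  refine Finset.sum_congr rfl fun k _ => ?_
  ring

theorem hamiltonianField_jacobi :
    hamiltonianField J f (hamiltonianField J g h) +
      hamiltonianField J g (hamiltonianField J h f) +
        hamiltonianField J h (hamiltonianField J f g) = 0 := by
  simp only [hamiltonianField_hamiltonianField]
  rw [hessianPairing_swap J f g h, hessianPairing_swap J g h f, hessianPairing_swap J h f g]
  abel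

end FinitelyManyModes

/-- The Poisson bracket over all modes. A coefficient to which infinitely many modes contribute gets
the junk value `0`. -/
noncomputable def poisson (f g : MvPowerSeries (σ ⊕ σ) R) : MvPowerSeries (σ ⊕ σ) R :=
  fun s => ∑ᶠ j, coeff s (poissonTerm j f g)

theorem coeff_poisson (s : σ ⊕ σ →₀ ℕ) (f g : MvPowerSeries (σ ⊕ σ) R) :
    coeff s (poisson f g) = ∑ᶠ j, coeff s (poissonTerm j f g) := rfl

theorem poisson_smul_right [NoZeroDivisors R] (c : R) (f g : MvPowerSeries (σ ⊕ σ) R) :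
    poisson f (c • g) = c • poisson f g := by
  ext s
  have hterm (j : σ) : poissonTerm j f (c • g) = c • poissonTerm j f g := by
    simp only [poissonTerm, Derivation.map_smul, mul_smul_comm, smul_sub]
  simp only [coeff_poisson, hterm, coeff_smul, mul_finsum]

section Conserved

variable {A τ : Type*} [AddCommGroup A]

/-- `f` has weight zero when the variable `i` has weight `w i`. For `w (inl j) = j` and
`w (inr j) = -j` this is conservation of momentum. -/
def IsConserved (w : τ → A) (f : MvPowerSeries τ R) : Prop :=
  ∀ s, Finsupp.weight w s ≠ 0 → coeff s f = 0

theorem IsConserved.finite_setOf_coeff_pderiv_mul_ne_zero {w : τ → A}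
    (hw : ∀ a, (w ⁻¹' {a}).Finite) {f : MvPowerSeries τ R} (hf : IsConserved w f) (s : τ →₀ ℕ) :
    {i | ∃ g, coeff s (pderiv R i f * g) ≠ 0}.Finite := by
  classical
  refine ((Finset.HasAntidiagonal.antidiagonal s).finite_toSet.biUnion fun t _ =>
    hw (-Finsupp.weight w t.1)).subset ?_
  rintro i ⟨g, hg⟩
  rw [coeff_mul] at hg
  obtain ⟨t, ht, htg⟩ := Finset.exists_ne_zero_of_sum_ne_zero hg
  refine Set.mem_biUnion ht ?_
  have hcoeff : coeff (t.1 + Finsupp.single i 1) f ≠ 0 := fun h0 => htg (by simp [coeff_pderiv, h0])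
  have hweight := not_imp_comm.mp (hf _) hcoeff
  rw [map_add, Finsupp.weight_single, one_smul] at hweight
  exact eq_neg_of_add_eq_zero_right hweight

theorem IsConserved.exists_coeff_poissonTerm_eq_zero {w : σ ⊕ σ → A}
    (hw : ∀ a, (w ⁻¹' {a}).Finite) {f : MvPowerSeries (σ ⊕ σ) R} (hf : IsConserved w f)
    (s : σ ⊕ σ →₀ ℕ) : ∃ J : Finset σ, ∀ j ∉ J, ∀ g, coeff s (poissonTerm j f g) = 0 := by
  have hfin := hf.finite_setOf_coeff_pderiv_mul_ne_zero hw s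
  have hl := hfin.preimage (Sum.inl_injective (β := σ)).injOn
  have hr := hfin.preimage (Sum.inr_injective (α := σ)).injOn
  refine ⟨(hl.union hr).toFinset, fun j hj g => ?_⟩
  simp only [Set.Finite.mem_toFinset, Set.mem_union, Set.mem_preimage, Set.mem_ofPred_eq, not_or,
    not_exists, not_not] at hj
  rw [poissonTerm, map_sub, hj.1, hj.2, sub_zero]

end Conserved

section Limit

open scoped MvPowerSeries.WithPiTopology

variable {A : Type*} [AddCommGroup A] {w : σ ⊕ σ → A} {f g h : MvPowerSeries (σ ⊕ σ) R}

theorem continuous_pderiv [TopologicalSpace R] [IsTopologicalRing R] {τ : Type*} (i : τ) :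
    Continuous (pderiv R i : MvPowerSeries τ R → MvPowerSeries τ R) := by
  refine continuous_pi fun n => ?_
  exact ((WithPiTopology.continuous_coeff R (n + Finsupp.single i 1)).mul_const _).congr fun f =>
    (coeff_pderiv f n).symm

theorem continuous_hamiltonianField [TopologicalSpace R] [IsTopologicalRing R] (J : Finset σ)
    (f : MvPowerSeries (σ ⊕ σ) R) : Continuous (hamiltonianField J f) := by
  simp only [funext (hamiltonianField_apply J f), poissonTerm]
  have := continuous_pderiv (R := R) (τ := σ ⊕ σ)
  fun_prop

theorem IsConserved.tendsto_hamiltonianField [TopologicalSpace R] [IsTopologicalRing R]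
    (hw : ∀ a, (w ⁻¹' {a}).Finite) (hf : IsConserved w f)
    {G : Finset σ → MvPowerSeries (σ ⊕ σ) R} (hG : Tendsto G atTop (𝓝 g)) :
    Tendsto (fun J => hamiltonianField J f (G J)) atTop (𝓝 (poisson f g)) := by
  refine (WithPiTopology.tendsto_iff_coeff_tendsto _ _ _).mpr fun s => ?_
  obtain ⟨J₀, hJ₀⟩ := hf.exists_coeff_poissonTerm_eq_zero hw s
  have hlim : coeff s (poisson f g) = coeff s (hamiltonianField J₀ f g) := by
    rw [coeff_poisson, hamiltonianField_apply, map_sum]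
    exact finsum_eq_sum_of_support_subset _ fun j hj => by_contra fun hj' => hj (hJ₀ j hj' g)
  rw [hlim]
  refine ((((WithPiTopology.continuous_coeff R s).comp
    (continuous_hamiltonianField J₀ f)).tendsto g).comp hG).congr' ?_
  filter_upwards [eventually_ge_atTop J₀] with J hJ
  simp only [Function.comp_apply, hamiltonianField_apply, map_sum]
  exact Finset.sum_subset hJ fun j _ hj => hJ₀ j hj _

theorem poisson_jacobi (hw : ∀ a, (w ⁻¹' {a}).Finite) (hf : IsConserved w f)
    (hg : IsConserved w g) (hh : IsConserved w h) :
    poisson f (poisson g h) + poisson g (poisson h f) + poisson h (poisson f g) = 0 := by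
  let _ : TopologicalSpace R := ⊥
  have : DiscreteTopology R := ⟨rfl⟩
  have hlim {f g h : MvPowerSeries (σ ⊕ σ) R} (hf : IsConserved w f) (hg : IsConserved w g) :
      Tendsto (fun J => hamiltonianField J f (hamiltonianField J g h)) atTop
        (𝓝 (poisson f (poisson g h))) :=
    hf.tendsto_hamiltonianField hw (hg.tendsto_hamiltonianField hw tendsto_const_nhds)
  refine tendsto_nhds_unique (((hlim hf hg).add (hlim hg hh)).add (hlim hh hf)) ?_
  simp only [hamiltonianField_jacobi, tendsto_const_nhds]

end Limit

end PoissonSeries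

namespace Coeffs

theorem wt_eq_zero_iff {α : Idx} : wt α = 0 ↔ α = 0 := Finsupp.degree_eq_zero_iff α

theorem wt_add (α β : Idx) : wt (α + β) = wt α + wt β := map_add Finsupp.degree α β

theorem wt_single (j : ℤ) : wt (Finsupp.single j 1) = 1 := Finsupp.degree_single j 1

theorem mom_add (α β γ δ : Idx) : mom (α + γ) (β + δ) = mom α β + mom γ δ := by
  have h (α γ : Idx) : ((α + γ).sum fun j n => j * (n : ℤ)) =
      (α.sum fun j n => j * (n : ℤ)) + γ.sum fun j n => j * (n : ℤ) :=
    Finsupp.sum_add_index' (by simp) (by intros; push_cast; ring)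
  rw [mom, mom, mom, h, h]
  ring

theorem mom_swap (α β : Idx) : mom β α = -mom α β := (neg_sub _ _).symm

theorem mom_single_zero (j : ℤ) : mom (Finsupp.single j 1) 0 = j := by simp [mom]

theorem mom_zero_single (j : ℤ) : mom 0 (Finsupp.single j 1) = -j := by simp [mom]

theorem mom_add_single_add_single (α β : Idx) (j : ℤ) :
    mom (α + Finsupp.single j 1) (β + Finsupp.single j 1) = mom α β := by
  rw [mom_add, add_eq_left, mom, sub_self]

/-- The reality condition: the function `∑ H_{α,β} u^α ū^β` is real valued. -/
def IsReal (H : Coeffs) : Prop := ∀ α β, H α β = starRingEnd ℂ (H β α)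

/-- Conservation of momentum: only coefficients of momentum zero may be nonzero. -/
def ConservesMomentum (H : Coeffs) : Prop := ∀ α β, mom α β ≠ 0 → H α β = 0

/-- All coefficients of scaling degree less than `n` vanish, where `(α, β)` has scaling degree
`|α| + |β| - 2`. -/
def VanishesBelow (n : ℕ) (H : Coeffs) : Prop := ∀ α β, wt α + wt β < n + 2 → H α β = 0

section Conditions

variable {F G H : Coeffs} {n : ℕ}

theorem VanishesBelow.add (hF : VanishesBelow n F) (hG : VanishesBelow n G) :
    VanishesBelow n (F + G) := fun α β h => by
  rw [Pi.add_apply, Pi.add_apply, hF α β h, hG α β h, add_zero]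

theorem VanishesBelow.smul (hH : VanishesBelow n H) (c : ℝ) : VanishesBelow n (c • H) :=
  fun α β h => by rw [Pi.smul_apply, Pi.smul_apply, hH α β h, smul_zero]

theorem IsReal.add (hF : IsReal F) (hG : IsReal G) : IsReal (F + G) := fun α β => by
  simp only [Pi.add_apply, map_add, ← hF α β, ← hG α β]

theorem IsReal.smul (hH : IsReal H) (c : ℝ) : IsReal (c • H) := fun α β => by
  simp only [Pi.smul_apply, Complex.real_smul, map_mul, Complex.conj_ofReal, ← hH α β]

theorem ConservesMomentum.add (hF : ConservesMomentum F) (hG : ConservesMomentum G) :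
    ConservesMomentum (F + G) := fun α β h => by
  rw [Pi.add_apply, Pi.add_apply, hF α β h, hG α β h, add_zero]

theorem ConservesMomentum.smul (hH : ConservesMomentum H) (c : ℝ) : ConservesMomentum (c • H) :=
  fun α β h => by rw [Pi.smul_apply, Pi.smul_apply, hH α β h, smul_zero]

theorem inF_iff : InF H ↔ VanishesBelow 0 H ∧ IsReal H ∧ ConservesMomentum H := by
  refine ⟨fun ⟨h00, h10, h01, hreal, hmom⟩ => ⟨fun α β hlt => ?_, hreal, hmom⟩,
    fun ⟨hlow, hreal, hmom⟩ => ⟨hlow _ _ (by simp [wt]), hlow _ _ (by simp [wt]),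
      hlow _ _ (by simp [wt]), hreal, hmom⟩⟩
  have hsingle {α : Idx} (h : wt α = 1) : ∃ j, Finsupp.single j 1 = α :=
    Finsupp.range_single_one.ge (h : α.degree = 1)
  obtain ⟨hα, hβ⟩ | ⟨hα, hβ⟩ | ⟨hα, hβ⟩ :
      (wt α = 0 ∧ wt β = 0) ∨ (wt α = 1 ∧ wt β = 0) ∨ (wt α = 0 ∧ wt β = 1) := by omega
  · rwa [wt_eq_zero_iff.mp hα, wt_eq_zero_iff.mp hβ]
  · obtain ⟨j, rfl⟩ := hsingle hα
    rw [wt_eq_zero_iff.mp hβ]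
    rcases eq_or_ne j 0 with rfl | hj
    · exact h10
    · exact hmom _ _ (by rwa [mom_single_zero])
  · obtain ⟨j, rfl⟩ := hsingle hβ
    rw [wt_eq_zero_iff.mp hα]
    rcases eq_or_ne j 0 with rfl | hj
    · exact h01
    · exact hmom _ _ (by rwa [mom_zero_single, neg_ne_zero])

end Conditions

section BracketTerm

variable {F G : Coeffs} {α β α₁ β₁ α₂ β₂ : Idx} {j : ℤ}

theorem single_le_add_of_mul_ne_zero
    (h : (α₁ j : ℂ) * β₂ j - (β₁ j : ℂ) * α₂ j ≠ 0) :
    Finsupp.single j 1 ≤ α₁ + α₂ ∧ Finsupp.single j 1 ≤ β₁ + β₂ := by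
  simp only [Finsupp.single_le_iff, Finsupp.add_apply]
  by_contra hlt
  refine h ?_
  have : (α₁ j = 0 ∧ α₂ j = 0) ∨ (β₁ j = 0 ∧ β₂ j = 0) := by omega
  rcases this with ⟨h1, h2⟩ | ⟨h1, h2⟩ <;> simp [h1, h2]

theorem of_bracketTerm_ne_zero (h : bracketTerm F G α β (j, (α₁, β₁), (α₂, β₂)) ≠ 0) :
    (mom α₁ β₁ = 0 ∧ mom α₂ β₂ = 0) ∧
      (α₁ + α₂ = α + Finsupp.single j 1 ∧ β₁ + β₂ = β + Finsupp.single j 1) ∧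
      (F α₁ β₁ ≠ 0 ∧ G α₂ β₂ ≠ 0) ∧ (α₁ j : ℂ) * β₂ j - (β₁ j : ℂ) * α₂ j ≠ 0 := by
  unfold bracketTerm at h
  split_ifs at h with hc
  · obtain ⟨hm₁, hm₂, rfl, rfl⟩ := hc
    obtain ⟨hFG, hj⟩ := mul_ne_zero_iff.mp h
    obtain ⟨hα, hβ⟩ := single_le_add_of_mul_ne_zero hj
    exact ⟨⟨hm₁, hm₂⟩, ⟨(tsub_add_cancel_of_le hα).symm, (tsub_add_cancel_of_le hβ).symm⟩,
      mul_ne_zero_iff.mp hFG, hj⟩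
  · exact absurd rfl h

theorem mom_eq_zero_of_bracketTerm_ne_zero
    (h : bracketTerm F G α β (j, (α₁, β₁), (α₂, β₂)) ≠ 0) : mom α β = 0 := by
  obtain ⟨⟨hm₁, hm₂⟩, ⟨hα, hβ⟩, -⟩ := of_bracketTerm_ne_zero h
  rw [← mom_add_single_add_single α β j, ← hα, ← hβ, mom_add, hm₁, hm₂, add_zero]

theorem wt_add_of_bracketTerm_ne_zero
    (h : bracketTerm F G α β (j, (α₁, β₁), (α₂, β₂)) ≠ 0) :
    (wt α₁ + wt β₁) + (wt α₂ + wt β₂) = wt α + wt β + 2 := by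
  obtain ⟨-, ⟨hα, hβ⟩, -⟩ := of_bracketTerm_ne_zero h
  have hwα := congrArg wt hα
  have hwβ := congrArg wt hβ
  simp only [wt_add, wt_single] at hwα hwβ
  omega

-- The momentum of `(γ, δ)` determines the mode `j` from multi-indices below `α` and `β`.
theorem exists_mom_eq_of_add_eq_add_single {γ γ' δ δ' : Idx}
    (hγ : γ' + γ = α + Finsupp.single j 1) (hδ : δ' + δ = β + Finsupp.single j 1)
    (hm : mom γ δ = 0) (hγj : γ' j ≠ 0) (hδj : δ j ≠ 0) : ∃ ε ≤ α, ∃ ζ ≤ β, mom ε ζ = j := by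
  have hγ' := tsub_add_cancel_of_le (Finsupp.single_le_iff.mpr (Nat.one_le_iff_ne_zero.mpr hγj))
  have hδ' := tsub_add_cancel_of_le (Finsupp.single_le_iff.mpr (Nat.one_le_iff_ne_zero.mpr hδj))
  refine ⟨γ, ?_, δ - Finsupp.single j 1, ?_, ?_⟩
  · rw [← hγ', add_right_comm] at hγ
    exact le_add_self.trans_eq (add_right_cancel hγ)
  · rw [tsub_le_iff_right, ← hδ]
    exact le_add_self
  · rw [← hδ', ← add_zero γ, mom_add, mom_zero_single] at hm
    exact add_neg_eq_zero.mp hm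

theorem exists_mom_eq_of_bracketTerm_ne_zero
    (h : bracketTerm F G α β (j, (α₁, β₁), (α₂, β₂)) ≠ 0) : ∃ γ ≤ α, ∃ δ ≤ β, mom γ δ = j := by
  obtain ⟨⟨hm₁, hm₂⟩, ⟨hα, hβ⟩, -, hj⟩ := of_bracketTerm_ne_zero h
  have hfactor : α₁ j * β₂ j ≠ 0 ∨ α₂ j * β₁ j ≠ 0 := by
    by_contra! h0
    refine hj ?_
    rw [mul_comm (β₁ j : ℂ), ← Nat.cast_mul, ← Nat.cast_mul, h0.1, h0.2, sub_self]
  rcases hfactor with hne | hne <;> obtain ⟨hαj, hβj⟩ := mul_ne_zero_iff.mp hne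
  · exact exists_mom_eq_of_add_eq_add_single hα hβ hm₂ hαj hβj
  · exact exists_mom_eq_of_add_eq_add_single ((add_comm _ _).trans hα) ((add_comm _ _).trans hβ)
      hm₁ hαj hβj

theorem hasFiniteSupport_bracketTerm (F G : Coeffs) (α β : Idx) :
    (bracketTerm F G α β).HasFiniteSupport := by
  have hmodes : (Set.image2 mom (Set.Iic α) (Set.Iic β)).Finite :=
    (Set.finite_Iic α).image2 _ (Set.finite_Iic β)
  have hfactor (j : ℤ) : (Set.Iic (α + Finsupp.single j 1) ×ˢ
      Set.Iic (β + Finsupp.single j 1)).Finite := (Set.finite_Iic _).prod (Set.finite_Iic _)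
  refine (hmodes.biUnion fun j _ =>
    (Set.finite_singleton j).prod ((hfactor j).prod (hfactor j))).subset ?_
  rintro ⟨j, ⟨α₁, β₁⟩, ⟨α₂, β₂⟩⟩ h
  obtain ⟨γ, hγ, δ, hδ, hmom⟩ := exists_mom_eq_of_bracketTerm_ne_zero h
  obtain ⟨-, ⟨hα, hβ⟩, -⟩ := of_bracketTerm_ne_zero h
  refine Set.mem_biUnion ⟨γ, hγ, δ, hδ, hmom⟩ ⟨rfl, ?_⟩
  simp only [← hα, ← hβ, Set.mem_prod, Set.mem_Iic, le_self_add, le_add_self, and_self]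

theorem bracketTerm_swap (F G : Coeffs) (α β : Idx) (j : ℤ) (p q : Idx × Idx) :
    bracketTerm G F α β (j, q, p) = -bracketTerm F G α β (j, p, q) := by
  simp only [bracketTerm, add_comm q.1, add_comm q.2,
    and_left_comm (a := mom q.1 q.2 = 0)]
  split_ifs <;> ring

theorem conj_bracketTerm (hF : IsReal F) (hG : IsReal G) (α β : Idx) (j : ℤ) (p q : Idx × Idx) :
    starRingEnd ℂ (bracketTerm F G β α (j, p, q)) =
      -bracketTerm F G α β (j, p.swap, q.swap) := by
  simp only [bracketTerm, Prod.fst_swap, Prod.snd_swap, mom_swap p.1, mom_swap q.1, neg_eq_zero,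
    and_comm (a := β = _), apply_ite (starRingEnd ℂ), map_zero, map_mul, map_sub,
    Complex.conj_natCast, ← hF p.2, ← hG q.2]
  split_ifs <;> ring

end BracketTerm

section Bracket

variable {F G H : Coeffs}

theorem bracket_add_left (F F' G : Coeffs) : bracket (F + F') G = bracket F G + bracket F' G := by
  funext α β
  have hterm (x) : bracketTerm (F + F') G α β x =
      bracketTerm F G α β x + bracketTerm F' G α β x := by
    simp only [bracketTerm, Pi.add_apply]
    split_ifs <;> ring
  simp only [bracket, Pi.add_apply, hterm, ← mul_add, finsum_add_distrib
    (hasFiniteSupport_bracketTerm F G α β) (hasFiniteSupport_bracketTerm F' G α β)]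

theorem bracket_smul_left (c : ℂ) (F G : Coeffs) : bracket (c • F) G = c • bracket F G := by
  funext α β
  have hterm (x) : bracketTerm (c • F) G α β x = c * bracketTerm F G α β x := by
    simp only [bracketTerm, Pi.smul_apply, smul_eq_mul]
    split_ifs <;> ring
  simp only [bracket, Pi.smul_apply, smul_eq_mul, hterm, ← mul_finsum, mul_left_comm]

theorem bracket_swap (F G : Coeffs) : bracket G F = -bracket F G := by
  funext α β
  simp only [bracket, Pi.neg_apply, ← mul_neg, ← finsum_neg_distrib]
  rw [← finsum_comp_equiv ((Equiv.refl ℤ).prodCongr (Equiv.prodComm (Idx × Idx) (Idx × Idx)))]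
  exact congrArg _ (finsum_congr fun x => bracketTerm_swap F G α β x.1 x.2.1 x.2.2)

theorem bracket_add_right (F G G' : Coeffs) : bracket F (G + G') = bracket F G + bracket F G' := by
  rw [bracket_swap _ F, bracket_add_left, neg_add, bracket_swap F G, bracket_swap F G', neg_neg,
    neg_neg]

theorem bracket_smul_right (c : ℂ) (F G : Coeffs) : bracket F (c • G) = c • bracket F G := by
  rw [bracket_swap _ F, bracket_smul_left, ← smul_neg, ← bracket_swap]

theorem bracket_neg_right (F G : Coeffs) : bracket F (-G) = -bracket F G := by
  simpa only [neg_one_smul] using bracket_smul_right (-1) F G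

theorem bracket_self (F : Coeffs) : bracket F F = 0 := self_eq_neg.mp (bracket_swap F F)

theorem exists_bracketTerm_ne_zero {α β : Idx} (h : bracket F G α β ≠ 0) :
    ∃ x, bracketTerm F G α β x ≠ 0 := by
  by_contra! hzero
  refine h ?_
  rw [bracket, finsum_eq_zero_of_forall_eq_zero hzero, mul_zero]

theorem conservesMomentum_bracket (F G : Coeffs) : ConservesMomentum (bracket F G) := by
  intro α β hmom
  by_contra hne
  obtain ⟨⟨j, ⟨α₁, β₁⟩, ⟨α₂, β₂⟩⟩, h⟩ := exists_bracketTerm_ne_zero hne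
  exact hmom (mom_eq_zero_of_bracketTerm_ne_zero h)

theorem VanishesBelow.bracket {a b : ℕ} (hF : VanishesBelow a F) (hG : VanishesBelow b G) :
    VanishesBelow (a + b) (bracket F G) := by
  intro α β hlt
  by_contra hne
  obtain ⟨⟨j, ⟨α₁, β₁⟩, ⟨α₂, β₂⟩⟩, h⟩ := exists_bracketTerm_ne_zero hne
  obtain ⟨-, -, ⟨hF₁, hG₂⟩, -⟩ := of_bracketTerm_ne_zero h
  have hwt := wt_add_of_bracketTerm_ne_zero h
  have h₁ := not_lt.mp (mt (hF α₁ β₁) hF₁)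
  have h₂ := not_lt.mp (mt (hG α₂ β₂) hG₂)
  omega

theorem IsReal.bracket (hF : IsReal F) (hG : IsReal G) : IsReal (bracket F G) := by
  intro α β
  simp only [_root_.bracket]
  rw [map_mul, Complex.conj_I, map_finsum _ (hasFiniteSupport_bracketTerm F G β α), neg_mul,
    ← mul_neg, ← finsum_neg_distrib, ← finsum_comp_equiv ((Equiv.refl ℤ).prodCongr
      ((Equiv.prodComm Idx Idx).prodCongr (Equiv.prodComm Idx Idx)))]
  refine congrArg _ (finsum_congr fun x => ?_)
  rw [conj_bracketTerm hF hG, neg_neg]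
  rfl

/-- The Euler derivation: multiplication of each coefficient by its scaling degree. -/
def euler (H : Coeffs) : Coeffs := fun α β => ((wt α : ℂ) + wt β - 2) * H α β

theorem euler_bracket (F G : Coeffs) :
    euler (bracket F G) = bracket (euler F) G + bracket F (euler G) := by
  funext α β
  have hterm (x) : bracketTerm (euler F) G α β x + bracketTerm F (euler G) α β x =
      ((wt α : ℂ) + wt β - 2) * bracketTerm F G α β x := by
    obtain ⟨j, ⟨α₁, β₁⟩, ⟨α₂, β₂⟩⟩ := x
    have hsum : bracketTerm (euler F) G α β (j, (α₁, β₁), (α₂, β₂)) +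
        bracketTerm F (euler G) α β (j, (α₁, β₁), (α₂, β₂)) =
          ((((wt α₁ + wt β₁) + (wt α₂ + wt β₂) : ℕ) : ℂ) - 4) *
            bracketTerm F G α β (j, (α₁, β₁), (α₂, β₂)) := by
      simp only [bracketTerm, euler, Nat.cast_add]
      split_ifs <;> ring
    by_cases h : bracketTerm F G α β (j, (α₁, β₁), (α₂, β₂)) = 0
    · rw [hsum, h, mul_zero, mul_zero]
    · rw [hsum, wt_add_of_bracketTerm_ne_zero h]
      push_cast
      ring
  simp only [bracket, euler, Pi.add_apply]
  rw [← mul_add, ← finsum_add_distrib (hasFiniteSupport_bracketTerm _ G α β)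
    (hasFiniteSupport_bracketTerm F _ α β), finsum_congr hterm, ← mul_finsum, mul_left_comm]

end Bracket

section Jacobi

open MvPowerSeries PoissonSeries

variable {F G H : Coeffs}

/-- The identification of multi-indices in the variables `u_j = inl j` and `ū_j = inr j` with pairs
`(α, β)`. -/
noncomputable def pairEquiv : (ℤ ⊕ ℤ →₀ ℕ) ≃+ Idx × Idx := Finsupp.sumFinsuppAddEquivProdFinsupp

/-- The power series `∑ F_{α,β} u^α ū^β`. -/
noncomputable def series (F : Coeffs) : MvPowerSeries (ℤ ⊕ ℤ) ℂ :=
  fun s => F (pairEquiv s).1 (pairEquiv s).2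

theorem coeff_series (F : Coeffs) (s : ℤ ⊕ ℤ →₀ ℕ) :
    coeff s (series F) = F (pairEquiv s).1 (pairEquiv s).2 := rfl

theorem series_injective : Function.Injective series := fun F G h => by
  funext α β
  simpa [coeff_series] using congrArg (coeff (pairEquiv.symm (α, β))) h

theorem pairEquiv_single_inl (j : ℤ) (n : ℕ) :
    pairEquiv (Finsupp.single (Sum.inl j) n) = (Finsupp.single j n, 0) := by
  rw [← AddEquiv.eq_symm_apply]
  ext (k | k) <;> simp [pairEquiv, Finsupp.single_apply]

theorem pairEquiv_single_inr (j : ℤ) (n : ℕ) :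
    pairEquiv (Finsupp.single (Sum.inr j) n) = (0, Finsupp.single j n) := by
  rw [← AddEquiv.eq_symm_apply]
  ext (k | k) <;> simp [pairEquiv, Finsupp.single_apply]

/-- The momentum of the variables: `u_j` has momentum `j` and `ū_j` has momentum `-j`. -/
def modeMomentum : ℤ ⊕ ℤ → ℤ := Sum.elim id Neg.neg

theorem finite_preimage_modeMomentum (a : ℤ) : (modeMomentum ⁻¹' {a}).Finite := by
  refine (Set.toFinite {Sum.inl a, Sum.inr (-a)}).subset ?_
  rintro (j | j) rfl <;> simp [modeMomentum]

theorem weight_modeMomentum (s : ℤ ⊕ ℤ →₀ ℕ) :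
    Finsupp.weight modeMomentum s = mom (pairEquiv s).1 (pairEquiv s).2 := by
  induction s using Finsupp.induction_linear with
  | zero => simp [mom]
  | add s t hs ht => rw [map_add, hs, ht, map_add, Prod.fst_add, Prod.snd_add, mom_add]
  | single i n =>
    rcases i with j | j <;>
      simp [pairEquiv_single_inl, pairEquiv_single_inr, modeMomentum, mom, Finsupp.weight_single,
        mul_comm]

theorem ConservesMomentum.isConserved_series (hF : ConservesMomentum F) :
    IsConserved modeMomentum (series F) := fun s hs =>
  hF _ _ (weight_modeMomentum s ▸ hs)

theorem bracketTerm_of_add_eq (hF : ConservesMomentum F) (hG : ConservesMomentum G)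
    {α β α₁ β₁ α₂ β₂ : Idx} {j : ℤ} (hα : α₁ + α₂ = α + Finsupp.single j 1)
    (hβ : β₁ + β₂ = β + Finsupp.single j 1) :
    bracketTerm F G α β (j, (α₁, β₁), (α₂, β₂)) =
      F α₁ β₁ * G α₂ β₂ * (α₁ j * β₂ j - β₁ j * α₂ j) := by
  simp only [bracketTerm, hα, hβ, add_tsub_cancel_right, and_true]
  by_cases h₁ : mom α₁ β₁ = 0
  · by_cases h₂ : mom α₂ β₂ = 0
    · rw [if_pos ⟨h₁, h₂⟩]
    · rw [if_neg fun h => h₂ h.2, hG _ _ h₂, mul_zero, zero_mul]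
  · rw [if_neg fun h => h₁ h.1, hF _ _ h₁, zero_mul, zero_mul]

theorem finsum_bracketTerm_eq_coeff_poissonTerm (hF : ConservesMomentum F)
    (hG : ConservesMomentum G) (s : ℤ ⊕ ℤ →₀ ℕ) (j : ℤ) :
    ∑ᶠ p, bracketTerm F G (pairEquiv s).1 (pairEquiv s).2 (j, p) =
      coeff s (poissonTerm j (series F) (series G)) := by
  have hpair (p : (ℤ ⊕ ℤ →₀ ℕ) × (ℤ ⊕ ℤ →₀ ℕ)) :
      p.1 + p.2 = s + Finsupp.single (Sum.inl j) 1 + Finsupp.single (Sum.inr j) 1 ↔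
        (pairEquiv p.1).1 + (pairEquiv p.2).1 = (pairEquiv s).1 + Finsupp.single j 1 ∧
          (pairEquiv p.1).2 + (pairEquiv p.2).2 = (pairEquiv s).2 + Finsupp.single j 1 := by
    rw [← pairEquiv.injective.eq_iff]
    simp only [map_add, pairEquiv_single_inl, pairEquiv_single_inr, Prod.ext_iff, Prod.fst_add,
      Prod.snd_add, add_zero]
  rw [← finsum_comp_equiv (pairEquiv.toEquiv.prodCongr pairEquiv.toEquiv), coeff_poissonTerm,
    finsum_eq_sum_of_support_subset (s := Finset.HasAntidiagonal.antidiagonal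
      (s + Finsupp.single (Sum.inl j) 1 + Finsupp.single (Sum.inr j) 1))]
  · refine Finset.sum_congr rfl fun p hp => ?_
    obtain ⟨hα, hβ⟩ := (hpair p).mp (Finset.HasAntidiagonal.mem_antidiagonal.mp hp)
    exact bracketTerm_of_add_eq hF hG hα hβ
  · intro p hp
    exact Finset.HasAntidiagonal.mem_antidiagonal.mpr
      ((hpair p).mpr (of_bracketTerm_ne_zero hp).2.1)

theorem series_bracket (hF : ConservesMomentum F) (hG : ConservesMomentum G) :
    series (bracket F G) = Complex.I • poisson (series F) (series G) := by
  ext s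
  rw [coeff_series, bracket, finsum_curry _ (hasFiniteSupport_bracketTerm F G _ _), coeff_smul,
    coeff_poisson, finsum_congr (finsum_bracketTerm_eq_coeff_poissonTerm hF hG s)]

theorem bracket_jacobi (hF : ConservesMomentum F) (hG : ConservesMomentum G)
    (hH : ConservesMomentum H) :
    bracket F (bracket G H) + bracket G (bracket H F) + bracket H (bracket F G) = 0 := by
  have hdouble {F G H : Coeffs} (hF : ConservesMomentum F) (hG : ConservesMomentum G)
      (hH : ConservesMomentum H) : series (bracket F (bracket G H)) =
        Complex.I • Complex.I • poisson (series F) (poisson (series G) (series H)) := by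
    rw [series_bracket hF (conservesMomentum_bracket G H), series_bracket hG hH,
      poisson_smul_right]
  have hjacobi := poisson_jacobi finite_preimage_modeMomentum hF.isConserved_series
    hG.isConserved_series hH.isConserved_series
  refine series_injective ?_
  calc series (bracket F (bracket G H) + bracket G (bracket H F) + bracket H (bracket F G))
      = series (bracket F (bracket G H)) + series (bracket G (bracket H F)) +
          series (bracket H (bracket F G)) := rfl
    _ = 0 := by
      rw [hdouble hF hG hH, hdouble hG hH hF, hdouble hH hF hG, ← smul_add, ← smul_add, ← smul_add,
        ← smul_add, hjacobi, smul_zero, smul_zero]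

end Jacobi

section Hamiltonians

variable {H : Coeffs}

/-- The real vector space `𝓕` of formal Hamiltonians. -/
def hamiltonians : Submodule ℝ Coeffs where
  carrier := {H | InF H}
  zero_mem' := inF_iff.mpr ⟨fun _ _ _ => rfl, fun _ _ => (map_zero _).symm, fun _ _ _ => rfl⟩
  add_mem' {F G} hF hG := by
    obtain ⟨hF₀, hFreal, hFmom⟩ := inF_iff.mp hF
    obtain ⟨hG₀, hGreal, hGmom⟩ := inF_iff.mp hG
    exact inF_iff.mpr ⟨hF₀.add hG₀, hFreal.add hGreal, hFmom.add hGmom⟩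
  smul_mem' c H hH := by
    obtain ⟨hH₀, hreal, hmom⟩ := inF_iff.mp hH
    exact inF_iff.mpr ⟨hH₀.smul c, hreal.smul c, hmom.smul c⟩

theorem mem_hamiltonians_iff :
    H ∈ hamiltonians ↔ VanishesBelow 0 H ∧ IsReal H ∧ ConservesMomentum H := inF_iff

theorem vanishesBelow_zero_coe (H : hamiltonians) : VanishesBelow 0 H.1 :=
  (mem_hamiltonians_iff.mp H.2).1

theorem isReal_coe (H : hamiltonians) : IsReal H.1 := (mem_hamiltonians_iff.mp H.2).2.1

theorem conservesMomentum_coe (H : hamiltonians) : ConservesMomentum H.1 :=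
  (mem_hamiltonians_iff.mp H.2).2.2

theorem bracket_mem_hamiltonians (F G : hamiltonians) : bracket F.1 G.1 ∈ hamiltonians :=
  mem_hamiltonians_iff.mpr ⟨(vanishesBelow_zero_coe F).bracket (vanishesBelow_zero_coe G),
    (isReal_coe F).bracket (isReal_coe G), conservesMomentum_bracket F.1 G.1⟩

theorem euler_mem_hamiltonians (H : hamiltonians) : euler H.1 ∈ hamiltonians := by
  refine mem_hamiltonians_iff.mpr ⟨fun α β h => ?_, fun α β => ?_, fun α β h => ?_⟩
  · rw [euler, vanishesBelow_zero_coe H α β h, mul_zero]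
  · simp only [euler, map_mul, map_sub, map_add, Complex.conj_natCast, Complex.conj_ofNat,
      ← isReal_coe H α β, add_comm (wt β : ℂ)]
  · rw [euler, conservesMomentum_coe H α β h, mul_zero]

theorem finsum_apply_eq_sum_range {u : ℕ → Coeffs} (hu : ∀ k, VanishesBelow k (u k)) {n : ℕ}
    {α β : Idx} (h : wt α + wt β < n + 2) :
    ∑ᶠ k, u k α β = ∑ k ∈ Finset.range n, u k α β := by
  refine finsum_eq_sum_of_support_subset _ fun k hk => ?_
  by_contra hnk
  rw [Finset.coe_range, Set.mem_Iio, not_lt] at hnk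
  exact hk (hu k α β (by omega))

theorem finsum_mem_hamiltonians {u : ℕ → hamiltonians} (hu : ∀ k, VanishesBelow k (u k).1) :
    (fun α β => ∑ᶠ k, (u k).1 α β) ∈ hamiltonians := by
  refine mem_hamiltonians_iff.mpr ⟨fun α β h => ?_, fun α β => ?_, fun α β h => ?_⟩
  · beta_reduce
    rw [finsum_apply_eq_sum_range hu h, Finset.sum_range_zero]
  · have hαβ : wt α + wt β < (wt α + wt β) + 2 := by omega
    have hβα : wt β + wt α < (wt α + wt β) + 2 := by omega
    beta_reduce
    rw [finsum_apply_eq_sum_range hu hαβ, finsum_apply_eq_sum_range hu hβα, map_sum]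
    exact Finset.sum_congr rfl fun k _ => isReal_coe (u k) α β
  · exact finsum_eq_zero_of_forall_eq_zero fun k => conservesMomentum_coe (u k) α β h

noncomputable instance : LieRing hamiltonians where
  bracket F G := ⟨bracket F.1 G.1, bracket_mem_hamiltonians F G⟩
  add_lie F G H := Subtype.ext (bracket_add_left F.1 G.1 H.1)
  lie_add F G H := Subtype.ext (bracket_add_right F.1 G.1 H.1)
  lie_self F := Subtype.ext (bracket_self F.1)
  leibniz_lie F G H := Subtype.ext <| by
    change bracket F.1 (bracket G.1 H.1) =
      bracket (bracket F.1 G.1) H.1 + bracket G.1 (bracket F.1 H.1)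
    rw [bracket_swap H.1 (bracket F.1 G.1), bracket_swap H.1 F.1, bracket_neg_right]
    have hjacobi := bracket_jacobi (conservesMomentum_coe F) (conservesMomentum_coe G)
      (conservesMomentum_coe H)
    rw [← sub_eq_zero, ← hjacobi]
    abel

theorem coe_lie (F G : hamiltonians) : (⁅F, G⁆ : hamiltonians) = bracket F.1 G.1 := rfl

noncomputable instance : LieAlgebra ℝ hamiltonians where
  lie_smul c F G := Subtype.ext (bracket_smul_right (c : ℂ) F.1 G.1)

/-- The Euler derivation of the Lie algebra of formal Hamiltonians. -/
noncomputable def eulerDerivation : LieDerivation ℝ hamiltonians hamiltonians where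
  toFun H := ⟨euler H.1, euler_mem_hamiltonians H⟩
  map_add' F G := Subtype.ext <| by
    funext α β
    exact mul_add _ (F.1 α β) (G.1 α β)
  map_smul' c H := Subtype.ext <| by
    funext α β
    exact mul_smul_comm c _ (H.1 α β)
  leibniz' F G := Subtype.ext <| by
    change euler (bracket F.1 G.1) = bracket F.1 (euler G.1) - bracket G.1 (euler F.1)
    rw [euler_bracket, bracket_swap (euler F.1), sub_neg_eq_add, add_comm]

/-- The filtration of `𝓕` by scaling degree: `fil n` is `𝓕^{≥n}`. -/
noncomputable def scalingFiltration : EulerFiltration ℝ hamiltonians where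
  fil n :=
    { carrier := {H | VanishesBelow n H.1}
      zero_mem' := fun _ _ _ => rfl
      add_mem' := VanishesBelow.add
      smul_mem' := fun c _ hH => hH.smul c }
  antitone_fil m n hmn H hH α β h := hH α β (by omega)
  fil_zero := eq_top_iff.mpr fun H _ => vanishesBelow_zero_coe H
  eq_zero_of_forall_mem H hH := Subtype.ext <| by
    funext α β
    exact hH (wt α + wt β) α β (by omega)
  lie_mem hF hG := VanishesBelow.bracket hF hG
  exists_sum u hu := by
    refine ⟨⟨_, finsum_mem_hamiltonians hu⟩, fun n α β h => sub_eq_zero.mpr ?_⟩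
    rw [Submodule.coe_sum, Finset.sum_apply, Finset.sum_apply]
    exact finsum_apply_eq_sum_range hu h
  deg := eulerDerivation
  deg_sub_smul_mem {n H} hH α β h := by
    change ((wt α : ℂ) + wt β - 2) * H.1 α β - (n : ℝ) • H.1 α β = 0
    rcases (Nat.lt_succ_iff.mp h).lt_or_eq with hlt | heq
    · rw [hH α β (by omega), mul_zero, smul_zero, sub_zero]
    · have hwt : (wt α : ℂ) + wt β = n + 2 := by exact_mod_cast (by omega : wt α + wt β = n + 2)
      rw [hwt, add_sub_cancel_right, Complex.real_smul, Complex.ofReal_natCast, sub_self]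

theorem coe_eq_finsum_of_isSum {u : ℕ → hamiltonians} {x : hamiltonians}
    (hx : scalingFiltration.IsSum u x) (α β : Idx) : x.1 α β = ∑ᶠ k, (u k).1 α β := by
  have hcoeff : x.1 α β - (∑ k ∈ Finset.range (wt α + wt β), u k).1 α β = 0 :=
    hx (wt α + wt β) α β (by omega)
  rw [finsum_apply_eq_sum_range hx.term_mem (by omega : _ < (wt α + wt β) + 2),
    sub_eq_zero.mp hcoeff, Submodule.coe_sum, Finset.sum_apply, Finset.sum_apply]

theorem coe_ad_pow (G H : hamiltonians) (k : ℕ) :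
    ((LieAlgebra.ad ℝ hamiltonians G ^ k) H : hamiltonians) = adPow G.1 k H.1 := by
  induction k with
  | zero => rfl
  | succ k ih => rw [pow_succ', Module.End.mul_apply, LieAlgebra.ad_apply, coe_lie, ih, adPow]

theorem coe_expTerm_apply (G H : hamiltonians) (k : ℕ) (α β : Idx) :
    (EulerFiltration.expTerm ℝ G k H).1 α β = (k.factorial : ℂ)⁻¹ * adPow G.1 k H.1 α β := by
  simp [EulerFiltration.expTerm, ← coe_ad_pow]

theorem coe_exp {G : hamiltonians} (hG : G ∈ scalingFiltration.fil 1) (H : hamiltonians) :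
    (scalingFiltration.exp hG H : Coeffs) = expAd G.1 H.1 := by
  funext α β
  rw [coe_eq_finsum_of_isSum (EulerFiltration.isSum_exp hG H), expAd,
    finsum_congr fun k => coe_expTerm_apply G H k α β]

end Hamiltonians

end Coeffs

/-- filtered Baker–Campbell–Hausdorff: for `F ∈ 𝓕^{≥d₁}` and
`G ∈ 𝓕^{≥d₂}` with `d₁, d₂ ≥ 1`, there is `K ∈ 𝓕^{≥1}` with
`e^{{G,·}} ∘ e^{{F,·}} = e^{{K,·}}` on `𝓕` and `K − F − G ∈ 𝓕^{≥d₁+d₂}`. -/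
theorem baker_campbell_hausdorff (d₁ d₂ : ℕ) (hd₁ : 1 ≤ d₁) (hd₂ : 1 ≤ d₂)
    (F G : Coeffs) (hF : InFge d₁ F) (hG : InFge d₂ G) :
    ∃ K : Coeffs, InFge 1 K ∧
      (∀ H : Coeffs, InF H → expAd G (expAd F H) = expAd K H) ∧
      InFge (d₁ + d₂) (K - F - G) := by
  have hF₁ : (⟨F, hF.1⟩ : Coeffs.hamiltonians) ∈ Coeffs.scalingFiltration.fil d₁ := hF.2
  have hG₂ : (⟨G, hG.1⟩ : Coeffs.hamiltonians) ∈ Coeffs.scalingFiltration.fil d₂ := hG.2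
  obtain ⟨K, hK, hexp, hsub⟩ := EulerFiltration.exists_exp_comp_exp_eq
    (EulerFiltration.mem_of_le hd₁ hF₁) (EulerFiltration.mem_of_le hd₂ hG₂) hF₁ hG₂
  refine ⟨K, ⟨K.2, hK⟩, fun H hH => ?_, Subtype.property (K - ⟨F, hF.1⟩ - ⟨G, hG.1⟩), hsub⟩
  have hexpH := congrArg Subtype.val (LinearMap.congr_fun hexp ⟨H, hH⟩)
  simpa only [LinearMap.comp_apply, Coeffs.coe_exp] using hexpH
end

section
/- (Formal Birkhoff Normal Form, uniqueness) Let ω ∈ ℝ^ℤ be non-resonant and let H = D_ω + Z + R with Z ∈ 𝓚 ∩ 𝓕^{≥2} and R ∈ 𝓕^{≥d}, d ≥ 1, and let S ∈ 𝓕^{≥d} be such that e^{{S,·}} H = D_ω + Z̃ with Z̃ ∈ 𝓚. If G ∈ 𝓕^{≥1} is such that e^{{G,·}} H − D_ω ∈ 𝓚, then e^{{G,·}} H = e^{{S,·}} H; hence to each such H one can associate a unique Z_H ∈ 𝓚 ∩ 𝓕^{≥2} such that every formal symplectic change of variables bringing H to normal form produces D_ω + Z_H. -/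
open scoped BigOperators ENNReal

/-- Membership in `𝓚`: supported on the diagonal `{α = β}`. -/
def InK (H : Coeffs) : Prop := InF H ∧ ∀ α β, α ≠ β → H α β = 0

/-- Membership in `𝓡`: supported off the diagonal. -/
def InR (H : Coeffs) : Prop := InF H ∧ ∀ α, H α α = 0

/-- The quadratic Hamiltonian `D_ω = ∑_j ω_j |u_j|²`, whose only nonzero
coefficients are `(D_ω)_{e_j,e_j} = ω_j`. -/
noncomputable def Dom (ω : ℤ → ℝ) : Coeffs := fun α β =>
  ∑ᶠ j : ℤ, if α = Finsupp.single j 1 ∧ β = Finsupp.single j 1 then (ω j : ℂ) else 0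

/-- Non-resonance: every non-trivial finite integer combination of `ω` is nonzero. -/
def NonResonant (ω : ℤ → ℝ) : Prop :=
  ∀ ℓ : ℤ →₀ ℤ, ℓ ≠ 0 → (ℓ.sum fun j c => ω j * (c : ℝ)) ≠ 0

/-!
Put `Φ = e^{{G,·}} e^{-{S,·}}` and `N = e^{{S,·}} H`, so that `N` and `Φ N = e^{{G,·}} H` are both
diagonal perturbations of `D_ω`. Then `Φ` fixes every diagonal Hamiltonian, in particular `N`.

Since `ω` is non-resonant, a Hamiltonian whose bracket with `Φ N` is diagonal is itself diagonal. If
`A` is diagonal then `{Φ N, Φ A} = Φ {N, A} = 0`, so `Φ` preserves diagonal Hamiltonians. Let `E` be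
the Euler operator, which multiplies a monomial of degree `n` by `n - 2` and is a derivation of the
bracket. Then `E Φ = Φ E + {W, Φ ·}` for some Hamiltonian `W`. Evaluating at `N` shows that
`{W, Φ N}` is diagonal, hence so is `W`, and therefore `Φ` commutes with `E` on diagonal
Hamiltonians. Thus `Φ` preserves their degree, and since it only adds terms of higher degree to the
leading one, it is the identity there. This replaces the Baker-Campbell-Hausdorff formula.

The required identities for `e^{t{G,·}}` follow from uniqueness for the equation `Y' = {G, Y}` in
`t`, which holds coefficient by coefficient because bracketing with `G` raises the degree.
-/

namespace BirkhoffNormalForm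

/-! ### Terms of the Poisson bracket -/

lemma wt_add (α β : Idx) : wt (α + β) = wt α + wt β :=
  Finsupp.sum_add_index' (fun _ => rfl) fun _ _ _ => rfl

lemma wt_single (j : ℤ) : wt (Finsupp.single j 1) = 1 := by
  simp [wt]

lemma mom_add (α β α' β' : Idx) : mom (α + α') (β + β') = mom α β + mom α' β' := by
  have sum_add (γ δ : Idx) : ((γ + δ).sum fun j n => j * (n : ℤ)) =
      (γ.sum fun j n => j * (n : ℤ)) + δ.sum fun j n => j * (n : ℤ) :=
    Finsupp.sum_add_index' (by simp) (by intros; push_cast; ring)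
  simp only [mom, sum_add]
  ring

lemma mom_self (α : Idx) : mom α α = 0 := sub_self _

lemma mom_single (j : ℤ) (m n : ℕ) :
    mom (Finsupp.single j m) (Finsupp.single j n) = j * (m - n : ℤ) := by
  simp [mom, mul_sub]

/-- The absolute momentum `∑_j |j| α_j`, which bounds the modes that can enter a bracket. -/
def absMom (α : Idx) : ℤ := α.sum fun j n => |j| * (n : ℤ)

lemma absMom_nonneg (α : Idx) : 0 ≤ absMom α :=
  Finset.sum_nonneg fun _ _ => by positivity

lemma absMom_mono {α β : Idx} (h : α ≤ β) : absMom α ≤ absMom β := by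
  obtain ⟨γ, rfl⟩ := exists_add_of_le h
  have hadd : absMom (α + γ) = absMom α + absMom γ :=
    Finsupp.sum_add_index' (by simp) (by intros; push_cast; ring)
  linarith [absMom_nonneg γ]

lemma abs_le_absMom {α : Idx} {j : ℤ} (h : α j ≠ 0) : |j| ≤ absMom α := by
  have hle : Finsupp.single j 1 ≤ α := Finsupp.single_le_iff.2 (Nat.one_le_iff_ne_zero.2 h)
  simpa [absMom] using absMom_mono hle

lemma abs_mom_le (α β : Idx) : |mom α β| ≤ absMom α + absMom β := by
  have abs_sum_le (γ : Idx) : |γ.sum fun j n => j * (n : ℤ)| ≤ absMom γ := by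
    refine (Finset.abs_sum_le_sum_abs _ _).trans_eq ?_
    simp [absMom, Finsupp.sum, abs_mul]
  exact (abs_sub _ _).trans (add_le_add (abs_sum_le α) (abs_sum_le β))

/-- The pair `(e_j, e_j)`, that is, the exponent of `u_j ū_j`. -/
noncomputable def unitPair (j : ℤ) : Idx × Idx := (Finsupp.single j 1, Finsupp.single j 1)

/-- The factor `α¹_j β²_j − β¹_j α²_j` of the Poisson bracket, as an alternating form in the two
pairs `p = (α¹, β¹)` and `q = (α², β²)`. -/
def wedge (j : ℤ) (p q : Idx × Idx) : ℂ :=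
  (p.1 j : ℂ) * (q.2 j : ℂ) - (p.2 j : ℂ) * (q.1 j : ℂ)

lemma wedge_swap (j : ℤ) (p q : Idx × Idx) : wedge j q p = -wedge j p q := by
  unfold wedge; ring

lemma wedge_add_right (j : ℤ) (p q r : Idx × Idx) :
    wedge j p (q + r) = wedge j p q + wedge j p r := by
  simp only [wedge, Prod.fst_add, Prod.snd_add, Finsupp.add_apply, Nat.cast_add]
  ring

lemma wedge_unitPair_self (j : ℤ) (p : Idx × Idx) :
    wedge j p (unitPair j) = (p.1 j : ℂ) - p.2 j := by
  simp [wedge, unitPair]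

lemma wedge_unitPair_of_ne {j k : ℤ} (h : k ≠ j) (p : Idx × Idx) :
    wedge j p (unitPair k) = 0 := by
  simp [wedge, unitPair, h]

lemma wedge_eq_zero_of_diagonal (j : ℤ) {p q : Idx × Idx} (hp : p.1 = p.2) (hq : q.1 = q.2) :
    wedge j p q = 0 := by
  rw [wedge, hp, hq, sub_self]

lemma mem_support_of_wedge_ne_zero {j : ℤ} {p q : Idx × Idx} (h : wedge j p q ≠ 0) :
    j ∈ p.1.support ∪ p.2.support := by
  contrapose! h
  simp_all [wedge]

lemma unitPair_le_add_of_wedge_ne_zero {j : ℤ} {p q : Idx × Idx} (h : wedge j p q ≠ 0) :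
    unitPair j ≤ p + q := by
  have one_le : 1 ≤ p.1 j + q.1 j ∧ 1 ≤ p.2 j + q.2 j := by
    contrapose! h
    have : (p.1 j = 0 ∧ q.1 j = 0) ∨ (p.2 j = 0 ∧ q.2 j = 0) := by omega
    rcases this with ⟨hp, hq⟩ | ⟨hp, hq⟩ <;> simp [wedge, hp, hq]
  exact Prod.mk_le_mk.2 ⟨Finsupp.single_le_iff.2 one_le.1, Finsupp.single_le_iff.2 one_le.2⟩

/-- The combinatorial conditions under which the term of the bracket indexed by
`x = (j, (α¹, β¹), (α², β²))` can contribute to the coefficient at the pair `r`. The truncated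
subtraction of `bracketTerm` is replaced by an honest addition. -/
structure Contributes (r : Idx × Idx) (x : ℤ × (Idx × Idx) × (Idx × Idx)) : Prop where
  mom_left : mom x.2.1.1 x.2.1.2 = 0
  mom_right : mom x.2.2.1 x.2.2.2 = 0
  add_eq : x.2.1 + x.2.2 = r + unitPair x.1
  wedge_ne_zero : wedge x.1 x.2.1 x.2.2 ≠ 0

lemma Contributes.swap {r p q : Idx × Idx} {j : ℤ} (h : Contributes r (j, p, q)) :
    Contributes r (j, q, p) where
  mom_left := h.mom_right
  mom_right := h.mom_left
  add_eq := (add_comm q p).trans h.add_eq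
  wedge_ne_zero := by
    rw [wedge_swap]
    exact neg_ne_zero.2 h.wedge_ne_zero

lemma Contributes.wt_add_wt {r p q : Idx × Idx} {j : ℤ} (h : Contributes r (j, p, q)) :
    (wt p.1 + wt p.2) + (wt q.1 + wt q.2) = wt r.1 + wt r.2 + 2 := by
  have hfst := congrArg (fun s : Idx × Idx => wt s.1) h.add_eq
  have hsnd := congrArg (fun s : Idx × Idx => wt s.2) h.add_eq
  simp only [unitPair, Prod.fst_add, Prod.snd_add, wt_add, wt_single] at hfst hsnd
  omega

lemma Contributes.abs_sub_eq_one {r p q : Idx × Idx} {j : ℤ} (h : Contributes r (j, p, q))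
    (hfst : r.1 j = 0) (hsnd : r.2 j = 0) : |(p.1 j : ℤ) - p.2 j| = 1 := by
  have hadd₁ : p.1 j + q.1 j = 1 := by
    simpa [unitPair, hfst] using congrArg (fun s : Idx × Idx => s.1 j) h.add_eq
  have hadd₂ : p.2 j + q.2 j = 1 := by
    simpa [unitPair, hsnd] using congrArg (fun s : Idx × Idx => s.2 j) h.add_eq
  have hne : p.1 j ≠ p.2 j := fun he => h.wedge_ne_zero <| by
    simp [wedge, he, show q.1 j = q.2 j by omega]
  rcases (by omega : p.1 j = 0 ∧ p.2 j = 1 ∨ p.1 j = 1 ∧ p.2 j = 0) with ⟨h₁, h₂⟩ | ⟨h₁, h₂⟩ <;>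
    simp [h₁, h₂]

lemma erase_le_of_add_eq_add_single {α γ δ : Idx} {j : ℤ}
    (h : α + γ = δ + Finsupp.single j 1) : α.erase j ≤ δ := fun i => by
  rcases eq_or_ne i j with rfl | hij
  · simp
  · have hi : α i + γ i = δ i := by simpa [hij] using DFunLike.congr_fun h i
    rw [Finsupp.erase_ne hij]
    omega

-- If the mode `j` does not occur in `r`, it is read off from the momentum of the remaining modes
-- of `p`, all of which occur in `r`.
lemma Contributes.abs_index_le {r p q : Idx × Idx} {j : ℤ} (h : Contributes r (j, p, q)) :
    |j| ≤ absMom r.1 + absMom r.2 := by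
  by_cases hr₁ : r.1 j = 0; swap
  · linarith [abs_le_absMom hr₁, absMom_nonneg r.2]
  by_cases hr₂ : r.2 j = 0; swap
  · linarith [abs_le_absMom hr₂, absMom_nonneg r.1]
  have hsplit : j * ((p.1 j : ℤ) - p.2 j) + mom (p.1.erase j) (p.2.erase j) = 0 := by
    rw [← mom_single, ← mom_add, Finsupp.single_add_erase, Finsupp.single_add_erase]
    exact h.mom_left
  have hle₁ : p.1.erase j ≤ r.1 := erase_le_of_add_eq_add_single (congrArg Prod.fst h.add_eq)
  have hle₂ : p.2.erase j ≤ r.2 := erase_le_of_add_eq_add_single (congrArg Prod.snd h.add_eq)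
  calc |j| = |j * ((p.1 j : ℤ) - p.2 j)| := by rw [abs_mul, h.abs_sub_eq_one hr₁ hr₂, mul_one]
    _ = |mom (p.1.erase j) (p.2.erase j)| := by rw [eq_neg_of_add_eq_zero_left hsplit, abs_neg]
    _ ≤ absMom (p.1.erase j) + absMom (p.2.erase j) := abs_mom_le _ _
    _ ≤ absMom r.1 + absMom r.2 := add_le_add (absMom_mono hle₁) (absMom_mono hle₂)

lemma finite_setOf_contributes (r : Idx × Idx) : {x | Contributes r x}.Finite := by
  set M := absMom r.1 + absMom r.2
  refine ((Set.finite_Icc (-M) M).biUnion fun j _ => (Set.finite_singleton j).prod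
    ((Set.finite_Iic (r + unitPair j)).prod (Set.finite_Iic (r + unitPair j)))).subset ?_
  rintro ⟨j, p, q⟩ h
  refine Set.mem_biUnion (abs_le.1 h.abs_index_le) ⟨rfl, ?_, ?_⟩
  · exact le_self_add.trans_eq h.add_eq
  · exact le_add_self.trans_eq h.add_eq

/-! ### The bracket as a continuous bilinear map -/

/-- The finitely many indices of the terms that can contribute to the coefficient at `r`. -/
noncomputable def contributions (r : Idx × Idx) : Finset (ℤ × (Idx × Idx) × (Idx × Idx)) :=
  (finite_setOf_contributes r).toFinset

lemma mem_contributions {r : Idx × Idx} {x : ℤ × (Idx × Idx) × (Idx × Idx)} :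
    x ∈ contributions r ↔ Contributes r x :=
  Set.Finite.mem_toFinset _

lemma contributes_of_bracketTerm_ne_zero {F G : Coeffs} {α β : Idx}
    {x : ℤ × (Idx × Idx) × (Idx × Idx)} (h : bracketTerm F G α β x ≠ 0) :
    Contributes (α, β) x := by
  obtain ⟨⟨hp, hq, rfl, rfl⟩, hterm⟩ := ite_ne_right_iff.1 h
  have hwedge : wedge x.1 x.2.1 x.2.2 ≠ 0 := right_ne_zero_of_mul hterm
  exact ⟨hp, hq, (tsub_add_cancel_of_le (unitPair_le_add_of_wedge_ne_zero hwedge)).symm, hwedge⟩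

lemma Contributes.bracketTerm_eq {α β : Idx} {x : ℤ × (Idx × Idx) × (Idx × Idx)}
    (h : Contributes (α, β) x) (F G : Coeffs) :
    bracketTerm F G α β x = F x.2.1.1 x.2.1.2 * G x.2.2.1 x.2.2.2 * wedge x.1 x.2.1 x.2.2 := by
  have hsub : (α, β) = x.2.1 + x.2.2 - unitPair x.1 := by rw [h.add_eq, add_tsub_cancel_right]
  exact if_pos ⟨h.mom_left, h.mom_right, congrArg Prod.fst hsub, congrArg Prod.snd hsub⟩

lemma bracket_apply (F G : Coeffs) (α β : Idx) :
    bracket F G α β = Complex.I * ∑ x ∈ contributions (α, β),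
      F x.2.1.1 x.2.1.2 * G x.2.2.1 x.2.2.2 * wedge x.1 x.2.1 x.2.2 := by
  rw [bracket, finsum_eq_sum_of_support_subset _ fun x hx =>
    mem_contributions.2 (contributes_of_bracketTerm_ne_zero hx)]
  congr 1
  exact Finset.sum_congr rfl fun x hx => (mem_contributions.1 hx).bracketTerm_eq F G

/-- The Poisson bracket as a bilinear map. -/
noncomputable def poisson : Coeffs →ₗ[ℂ] Coeffs →ₗ[ℂ] Coeffs :=
  LinearMap.mk₂ ℂ bracket
    (fun F F' G => by
      funext α β
      simp only [bracket_apply, Pi.add_apply, add_mul, Finset.sum_add_distrib, mul_add])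
    (fun c F G => by
      funext α β
      simp only [bracket_apply, Pi.smul_apply, smul_eq_mul, Finset.mul_sum]
      exact Finset.sum_congr rfl fun _ _ => by ring)
    (fun F G G' => by
      funext α β
      simp only [bracket_apply, Pi.add_apply, add_mul, Finset.sum_add_distrib, mul_add])
    (fun c F G => by
      funext α β
      simp only [bracket_apply, Pi.smul_apply, smul_eq_mul, Finset.mul_sum]
      exact Finset.sum_congr rfl fun _ _ => by ring)

lemma poisson_apply (F G : Coeffs) (α β : Idx) :
    poisson F G α β = Complex.I * ∑ x ∈ contributions (α, β),
      F x.2.1.1 x.2.1.2 * G x.2.2.1 x.2.2.2 * wedge x.1 x.2.1 x.2.2 :=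
  bracket_apply F G α β

lemma poisson_apply_eq_zero {F G : Coeffs} {α β : Idx}
    (h : ∀ j p q, Contributes (α, β) (j, p, q) → F p.1 p.2 = 0 ∨ G q.1 q.2 = 0) :
    poisson F G α β = 0 := by
  rw [poisson_apply, Finset.sum_eq_zero, mul_zero]
  rintro ⟨j, p, q⟩ hx
  rw [mul_eq_zero_of_left]
  exact mul_eq_zero.2 (h j p q (mem_contributions.1 hx))

lemma poisson_swap (F G : Coeffs) : poisson G F = -poisson F G := by
  funext α β
  simp only [Pi.neg_apply, poisson_apply, ← mul_neg, ← Finset.sum_neg_distrib]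
  congr 1
  have swap_mem : ∀ x ∈ contributions (α, β), (x.1, x.2.2, x.2.1) ∈ contributions (α, β) :=
    fun x hx => mem_contributions.2 (mem_contributions.1 hx).swap
  refine Finset.sum_bij' (fun x _ => (x.1, x.2.2, x.2.1)) (fun x _ => (x.1, x.2.2, x.2.1))
    swap_mem swap_mem (fun _ _ => rfl) (fun _ _ => rfl) fun x _ => ?_
  rw [wedge_swap x.1 x.2.1 x.2.2]
  ring

lemma continuous_poisson_right (F : Coeffs) : Continuous fun G => poisson F G := by
  refine continuous_pi fun α => continuous_pi fun β => ?_
  simp only [poisson_apply]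
  fun_prop

/-- The monomial `u^α ū^β`, where `p = (α, β)`. -/
noncomputable def monomial (p : Idx × Idx) : Coeffs := fun α β => if (α, β) = p then 1 else 0

lemma hasSum_monomial (F : Coeffs) : HasSum (fun p : Idx × Idx => F p.1 p.2 • monomial p) F := by
  refine Pi.hasSum.2 fun α => Pi.hasSum.2 fun β => ?_
  convert hasSum_single (f := fun p : Idx × Idx => (F p.1 p.2 • monomial p) α β) (α, β)
    fun p hp => by simp [monomial, hp.symm] using 1
  simp [monomial]

lemma ext_monomial {L M : Coeffs →ₗ[ℂ] Coeffs} (hL : Continuous L) (hM : Continuous M)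
    (h : ∀ p, L (monomial p) = M (monomial p)) : L = M := by
  ext1 F
  have hLF := (hasSum_monomial F).map L hL
  have hMF := (hasSum_monomial F).map M hM
  have hcomp : (L ∘ fun p : Idx × Idx => F p.1 p.2 • monomial p) =
      M ∘ fun p : Idx × Idx => F p.1 p.2 • monomial p := by
    funext p
    simp only [Function.comp_apply, map_smul, h p]
  rw [hcomp] at hLF
  exact hLF.unique hMF

/-! ### The Jacobi identity -/

lemma monomial_apply_ne_zero {p : Idx × Idx} {α β : Idx} (h : monomial p α β ≠ 0) :
    (α, β) = p := by
  contrapose! h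
  exact if_neg h

lemma poisson_monomial_right_eq_zero {q : Idx × Idx} (hq : mom q.1 q.2 ≠ 0) (F : Coeffs) :
    poisson F (monomial q) = 0 := by
  funext α β
  refine poisson_apply_eq_zero fun j p q' h => Or.inr ?_
  contrapose! hq
  rw [← monomial_apply_ne_zero hq]
  exact h.mom_right

lemma poisson_monomial_left_eq_zero {p : Idx × Idx} (hp : mom p.1 p.2 ≠ 0) (G : Coeffs) :
    poisson (monomial p) G = 0 := by
  rw [poisson_swap, poisson_monomial_right_eq_zero hp, neg_zero]

lemma bracketTerm_monomial {p q : Idx × Idx} (hp : mom p.1 p.2 = 0) (hq : mom q.1 q.2 = 0)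
    (j : ℤ) (α β : Idx) :
    bracketTerm (monomial p) (monomial q) α β (j, p, q) =
      wedge j p q * monomial (p + q - unitPair j) α β := by
  by_cases hr : (α, β) = p + q - unitPair j
  · rw [bracketTerm, if_pos ⟨hp, hq, congrArg Prod.fst hr, congrArg Prod.snd hr⟩]
    simp [monomial, wedge, hr]
  · rw [monomial, if_neg hr, mul_zero]
    exact if_neg fun h => hr (Prod.ext h.2.2.1 h.2.2.2)

lemma poisson_monomial {p q : Idx × Idx} (hp : mom p.1 p.2 = 0) (hq : mom q.1 q.2 = 0)
    {s : Finset ℤ} (hs : p.1.support ∪ p.2.support ⊆ s) :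
    poisson (monomial p) (monomial q) =
      ∑ j ∈ s, (Complex.I * wedge j p q) • monomial (p + q - unitPair j) := by
  funext α β
  have hinj : Function.Injective fun j : ℤ => (j, p, q) := fun _ _ h => congrArg Prod.fst h
  have hsupp : Function.support (bracketTerm (monomial p) (monomial q) α β) ⊆
      s.image fun j => (j, p, q) := by
    rintro ⟨j, p', q'⟩ hx
    have hc := contributes_of_bracketTerm_ne_zero hx
    rw [Function.mem_support, hc.bracketTerm_eq] at hx
    obtain rfl : p' = p := monomial_apply_ne_zero (left_ne_zero_of_mul (left_ne_zero_of_mul hx))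
    obtain rfl : q' = q := monomial_apply_ne_zero (right_ne_zero_of_mul (left_ne_zero_of_mul hx))
    simpa using hs (mem_support_of_wedge_ne_zero hc.wedge_ne_zero)
  change bracket _ _ α β = _
  rw [bracket, finsum_eq_sum_of_support_subset _ hsupp, Finset.sum_image hinj.injOn,
    Finset.mul_sum]
  simp only [Finset.sum_apply, Pi.smul_apply, smul_eq_mul, bracketTerm_monomial hp hq, mul_assoc]

lemma mom_sub_unitPair {p : Idx × Idx} {j : ℤ} (hj : unitPair j ≤ p) :
    mom (p - unitPair j).1 (p - unitPair j).2 = mom p.1 p.2 := by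
  conv_rhs => rw [← tsub_add_cancel_of_le hj]
  rw [Prod.fst_add, Prod.snd_add, mom_add]
  simp [unitPair, mom_self]

/-- Minus the coefficient in the double bracket `{p, {q, r}}` of three monomials that comes from
contracting the mode `k` in the inner bracket and the mode `j` in the outer one. -/
noncomputable def doubleWedge (p q r : Idx × Idx) (j k : ℤ) : ℂ :=
  wedge k q r * (wedge j p q + wedge j p r - wedge j p (unitPair k))

lemma poisson_monomial_poisson_monomial {p q r : Idx × Idx} (hp : mom p.1 p.2 = 0)
    (hq : mom q.1 q.2 = 0) (hr : mom r.1 r.2 = 0) {s : Finset ℤ}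
    (hps : p.1.support ∪ p.2.support ⊆ s) (hqs : q.1.support ∪ q.2.support ⊆ s) :
    poisson (monomial p) (poisson (monomial q) (monomial r)) =
      -∑ k ∈ s, ∑ j ∈ s,
        doubleWedge p q r j k • monomial (p + q + r - (unitPair j + unitPair k)) := by
  simp only [poisson_monomial hq hr hqs, map_sum, map_smul, ← Finset.sum_neg_distrib]
  refine Finset.sum_congr rfl fun k _ => ?_
  by_cases hw : wedge k q r = 0
  · simp [hw, doubleWedge]
  have hk : unitPair k ≤ q + r := unitPair_le_add_of_wedge_ne_zero hw
  have hmom : mom (q + r - unitPair k).1 (q + r - unitPair k).2 = 0 := by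
    rw [mom_sub_unitPair hk, Prod.fst_add, Prod.snd_add, mom_add, hq, hr, add_zero]
  rw [poisson_monomial hp hmom hps, Finset.smul_sum]
  refine Finset.sum_congr rfl fun j _ => ?_
  have hwedge : wedge j p (q + r - unitPair k) =
      wedge j p q + wedge j p r - wedge j p (unitPair k) := by
    rw [← wedge_add_right, ← tsub_add_cancel_of_le hk, wedge_add_right, add_tsub_cancel_right,
      add_sub_cancel_right]
  rw [hwedge, ← add_tsub_assoc_of_le hk, ← add_assoc, tsub_tsub, add_comm (unitPair k), smul_smul,
    ← neg_smul, doubleWedge]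
  congr 1
  linear_combination (wedge k q r * (wedge j p q + wedge j p r - wedge j p (unitPair k))) *
    Complex.I_mul_I

lemma sum_sum_smul_eq_zero_of_antisymm {ι R E : Type*} [Ring R] [AddCommGroup E] [Module R E]
    [IsAddTorsionFree E] {s : Finset ι} {c : ι → ι → R} {v : ι → ι → E} (hc : ∀ j k, c k j = -c j k)
    (hv : ∀ j k, v k j = v j k) : ∑ k ∈ s, ∑ j ∈ s, c j k • v j k = 0 := by
  have hneg : ∑ k ∈ s, ∑ j ∈ s, c j k • v j k = -∑ k ∈ s, ∑ j ∈ s, c j k • v j k := by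
    conv_lhs => rw [Finset.sum_comm]
    simp only [← Finset.sum_neg_distrib, ← neg_smul]
    exact Finset.sum_congr rfl fun k _ => Finset.sum_congr rfl fun j _ => by rw [hc, hv]
  exact self_eq_neg.1 hneg

lemma doubleWedge_jacobi_antisymm (p q r : Idx × Idx) (j k : ℤ) :
    doubleWedge p q r k j + doubleWedge r p q k j - doubleWedge q p r k j =
      -(doubleWedge p q r j k + doubleWedge r p q j k - doubleWedge q p r j k) := by
  simp only [doubleWedge, wedge_swap _ p r, wedge_swap _ q r, wedge_swap _ p q]
  rcases eq_or_ne j k with rfl | hjk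
  · simp only [wedge_unitPair_self]
    simp only [wedge]
    ring
  · simp only [wedge_unitPair_of_ne hjk, wedge_unitPair_of_ne hjk.symm]
    ring

lemma poisson_monomial_leibniz (p q r : Idx × Idx) :
    poisson (monomial p) (poisson (monomial q) (monomial r)) =
      poisson (poisson (monomial p) (monomial q)) (monomial r) +
        poisson (monomial q) (poisson (monomial p) (monomial r)) := by
  by_cases hp : mom p.1 p.2 = 0; swap
  · simp [poisson_monomial_left_eq_zero hp]
  by_cases hq : mom q.1 q.2 = 0; swap
  · simp [poisson_monomial_left_eq_zero hq, poisson_monomial_right_eq_zero hq]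
  by_cases hr : mom r.1 r.2 = 0; swap
  · simp [poisson_monomial_right_eq_zero hr]
  set s := (p.1.support ∪ p.2.support) ∪ (q.1.support ∪ q.2.support) ∪
    (r.1.support ∪ r.2.support)
  have hps : p.1.support ∪ p.2.support ⊆ s :=
    Finset.subset_union_left.trans Finset.subset_union_left
  have hqs : q.1.support ∪ q.2.support ⊆ s :=
    Finset.subset_union_right.trans Finset.subset_union_left
  have hrs : r.1.support ∪ r.2.support ⊆ s := Finset.subset_union_right
  have hsum := sum_sum_smul_eq_zero_of_antisymm (s := s) (doubleWedge_jacobi_antisymm p q r)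
    (v := fun j k => monomial (p + q + r - (unitPair j + unitPair k)))
    fun j k => by rw [add_comm (unitPair k)]
  simp only [sub_smul, add_smul, Finset.sum_sub_distrib, Finset.sum_add_distrib] at hsum
  rw [poisson_swap (monomial r) (poisson _ _), poisson_monomial_poisson_monomial hp hq hr hps hqs,
    poisson_monomial_poisson_monomial hr hp hq hrs hps,
    poisson_monomial_poisson_monomial hq hp hr hqs hps, add_comm q p, add_assoc r, add_comm r]
  linear_combination (exp := 1) -hsum

/-- The failure of `{A, ·}` to be a derivation of the bracket at `{B, ·}`, as a linear map. -/
noncomputable def jacobiator (A B : Coeffs) : Coeffs →ₗ[ℂ] Coeffs :=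
  poisson A ∘ₗ poisson B - poisson (poisson A B) - poisson B ∘ₗ poisson A

lemma jacobiator_apply (A B C : Coeffs) : jacobiator A B C =
    poisson A (poisson B C) - poisson (poisson A B) C - poisson B (poisson A C) := rfl

lemma jacobiator_rotate (A B C : Coeffs) : jacobiator B C A = jacobiator A B C := by
  simp only [jacobiator_apply, poisson_swap A B, poisson_swap A C, poisson_swap A (poisson B C),
    poisson_swap (poisson A B) C, map_neg]
  abel

lemma continuous_jacobiator (A B : Coeffs) : Continuous (jacobiator A B) :=
  (((continuous_poisson_right A).comp (continuous_poisson_right B)).sub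
    (continuous_poisson_right _)).sub
    ((continuous_poisson_right B).comp (continuous_poisson_right A))

lemma jacobiator_eq_zero_of_monomial {A B : Coeffs} (h : ∀ r, jacobiator A B (monomial r) = 0)
    (C : Coeffs) : jacobiator A B C = 0 :=
  LinearMap.congr_fun (ext_monomial (M := 0) (continuous_jacobiator A B) continuous_const h) C

lemma jacobiator_monomial (p q r : Idx × Idx) :
    jacobiator (monomial p) (monomial q) (monomial r) = 0 := by
  rw [jacobiator_apply, poisson_monomial_leibniz, sub_sub, sub_self]

lemma poisson_leibniz (A B C : Coeffs) :
    poisson A (poisson B C) = poisson (poisson A B) C + poisson B (poisson A C) := by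
  have h : jacobiator A B C = 0 := by
    refine jacobiator_eq_zero_of_monomial (fun r => ?_) C
    rw [← jacobiator_rotate, ← jacobiator_rotate]
    refine jacobiator_eq_zero_of_monomial (fun q => ?_) B
    rw [← jacobiator_rotate, ← jacobiator_rotate]
    exact jacobiator_eq_zero_of_monomial (jacobiator_monomial q r) A
  rw [jacobiator_apply, sub_sub] at h
  exact sub_eq_zero.1 h

/-! ### The degree filtration and the exponential -/

/-- The Hamiltonians all of whose monomials have degree at least `n`. Thus `orderGE (d + 2)`
contains `𝓕^{≥d}`. -/
def orderGE (n : ℕ) : Submodule ℂ Coeffs where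
  carrier := {H | ∀ α β, wt α + wt β < n → H α β = 0}
  add_mem' hF hG α β h := by simp [hF α β h, hG α β h]
  zero_mem' _ _ _ := rfl
  smul_mem' c F hF α β h := by simp [hF α β h]

lemma mem_orderGE_zero (H : Coeffs) : H ∈ orderGE 0 := fun _ _ h => absurd h (Nat.not_lt_zero _)

lemma orderGE_antitone : Antitone orderGE := fun _ _ hmn _ hH α β h => hH α β (h.trans_le hmn)

lemma eq_zero_of_forall_mem_orderGE {H : Coeffs} (h : ∀ n, H ∈ orderGE n) : H = 0 :=
  funext fun α => funext fun β => h _ α β (Nat.lt_succ_self _)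

lemma poisson_mem_orderGE {k m n : ℕ} {F G : Coeffs} (hF : F ∈ orderGE m) (hG : G ∈ orderGE n)
    (hk : k + 2 ≤ m + n) : poisson F G ∈ orderGE k := fun α β h =>
  poisson_apply_eq_zero fun j p q hc => by
    have hwt := hc.wt_add_wt
    rcases lt_or_ge (wt p.1 + wt p.2) m with hp | hp
    · exact Or.inl (hF _ _ hp)
    · exact Or.inr (hG _ _ (by dsimp only at hwt; omega))

lemma poisson_pow_mem_orderGE {G H : Coeffs} {n : ℕ} (hG : G ∈ orderGE 3) (hH : H ∈ orderGE n)
    (k : ℕ) : (poisson G ^ k) H ∈ orderGE (n + k) := by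
  induction k with
  | zero => exact hH
  | succ k ih =>
    rw [pow_succ', Module.End.mul_apply]
    exact poisson_mem_orderGE hG ih (by omega)

lemma adPow_eq_poisson_pow (G H : Coeffs) (k : ℕ) : adPow G k H = (poisson G ^ k) H := by
  induction k with
  | zero => rfl
  | succ k ih => rw [pow_succ', Module.End.mul_apply, adPow, ih]; rfl

lemma expAd_apply {G : Coeffs} (hG : G ∈ orderGE 3) (H : Coeffs) {α β : Idx} {K : ℕ}
    (hK : wt α + wt β < K) :
    expAd G H α β = ∑ k ∈ Finset.range K, (k.factorial : ℂ)⁻¹ * (poisson G ^ k) H α β := by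
  simp only [expAd, adPow_eq_poisson_pow]
  refine finsum_eq_sum_of_support_subset _ fun k hk => ?_
  contrapose! hk
  rw [Finset.coe_range, Set.mem_Iio, not_lt] at hk
  rw [Function.notMem_support, poisson_pow_mem_orderGE hG (mem_orderGE_zero H) k α β (by omega),
    mul_zero]

lemma expAd_sub_self_mem_orderGE {G A : Coeffs} {n : ℕ} (hG : G ∈ orderGE 3)
    (hA : A ∈ orderGE n) : expAd G A - A ∈ orderGE (n + 1) := fun α β h => by
  rw [Pi.sub_apply, Pi.sub_apply, expAd_apply hG A (Nat.lt_succ_self _), Finset.sum_range_succ']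
  rw [Finset.sum_eq_zero fun k _ => ?_]
  · simp
  · rw [poisson_pow_mem_orderGE hG hA (k + 1) α β (by omega), mul_zero]

/-- The operator `e^{{G,·}}` as a linear endomorphism. -/
noncomputable def expEnd {G : Coeffs} (hG : G ∈ orderGE 3) : Module.End ℂ Coeffs where
  toFun := expAd G
  map_add' F F' := by
    funext α β
    simp only [Pi.add_apply, expAd_apply hG _ (Nat.lt_succ_self (wt α + wt β)), map_add, mul_add,
      Finset.sum_add_distrib]
  map_smul' c F := by
    funext α β
    simp only [Pi.smul_apply, expAd_apply hG _ (Nat.lt_succ_self (wt α + wt β)), map_smul,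
      smul_eq_mul, RingHom.id_apply, Finset.mul_sum, mul_left_comm c]

lemma expEnd_apply {G : Coeffs} (hG : G ∈ orderGE 3) (A : Coeffs) : expEnd hG A = expAd G A := rfl

lemma expAd_zero (A : Coeffs) : expAd 0 A = A := by
  funext α β
  rw [expAd_apply (zero_mem _) A (Nat.lt_succ_self _), Finset.sum_range_succ']
  simp [pow_succ]

/-! ### Coefficientwise differential equations -/

/-- The curve `Y` of Hamiltonians is differentiable, with derivative `Y'`, in every coefficient. -/
def HasCoeffDeriv (Y Y' : ℂ → Coeffs) : Prop :=
  ∀ α β t, HasDerivAt (fun s => Y s α β) (Y' t α β) t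

namespace HasCoeffDeriv

variable {X X' Y Y' : ℂ → Coeffs}

lemma sub (hX : HasCoeffDeriv X X') (hY : HasCoeffDeriv Y Y') :
    HasCoeffDeriv (fun t => X t - Y t) fun t => X' t - Y' t :=
  fun α β t => (hX α β t).sub (hY α β t)

lemma const (A : Coeffs) : HasCoeffDeriv (fun _ => A) fun _ => 0 :=
  fun α β t => hasDerivAt_const t (A α β)

lemma poisson (hX : HasCoeffDeriv X X') (hY : HasCoeffDeriv Y Y') :
    HasCoeffDeriv (fun t => poisson (X t) (Y t))
      fun t => poisson (X' t) (Y t) + poisson (X t) (Y' t) := by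
  intro α β t
  simp only [Pi.add_apply, poisson_apply, ← mul_add, ← Finset.sum_add_distrib]
  refine HasDerivAt.const_mul _ (HasDerivAt.fun_sum fun x _ => ?_)
  rw [← add_mul]
  exact ((hX _ _ t).mul (hY _ _ t)).mul_const _

end HasCoeffDeriv

lemma eq_of_hasCoeffDeriv_zero {Y : ℂ → Coeffs} (hY : HasCoeffDeriv Y fun _ => 0) (t : ℂ) :
    Y t = Y 0 :=
  funext fun α => funext fun β =>
    is_const_of_deriv_eq_zero (fun s => (hY α β s).differentiableAt) (fun s => (hY α β s).deriv) t 0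

lemma eq_zero_of_hasCoeffDeriv_poisson {G : Coeffs} (hG : G ∈ orderGE 3) {Y : ℂ → Coeffs}
    (hY : HasCoeffDeriv Y fun t => poisson G (Y t)) (hY₀ : Y 0 = 0) (t : ℂ) : Y t = 0 := by
  suffices h : ∀ n t, Y t ∈ orderGE n from eq_zero_of_forall_mem_orderGE fun n => h n t
  intro n
  induction n with
  | zero => exact fun t => mem_orderGE_zero _
  | succ n ih =>
    intro t α β hlt
    have hderiv (s : ℂ) : poisson G (Y s) α β = 0 :=
      poisson_mem_orderGE hG (ih s) (by omega) α β hlt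
    have hconst := is_const_of_deriv_eq_zero (fun s => (hY α β s).differentiableAt)
      (fun s => (hY α β s).deriv.trans (hderiv s)) t 0
    exact hconst.trans (congrArg (fun F : Coeffs => F α β) hY₀)

lemma expAd_smul_apply {G : Coeffs} (hG : G ∈ orderGE 3) (A : Coeffs) {α β : Idx} {K : ℕ}
    (hK : wt α + wt β < K) (t : ℂ) : expAd (t • G) A α β =
      ∑ k ∈ Finset.range K, t ^ k * ((k.factorial : ℂ)⁻¹ * (poisson G ^ k) A α β) := by
  rw [expAd_apply ((orderGE 3).smul_mem t hG) A hK]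
  refine Finset.sum_congr rfl fun k _ => ?_
  rw [map_smul, smul_pow, LinearMap.smul_apply, Pi.smul_apply, Pi.smul_apply, smul_eq_mul,
    mul_left_comm]

lemma poisson_expAd_smul_apply {G : Coeffs} (hG : G ∈ orderGE 3) (A : Coeffs) {α β : Idx} {K : ℕ}
    (hK : wt α + wt β < K) (t : ℂ) : poisson G (expAd (t • G) A) α β =
      ∑ k ∈ Finset.range K, t ^ k * ((k.factorial : ℂ)⁻¹ * (poisson G ^ (k + 1)) A α β) := by
  set T := ∑ k ∈ Finset.range K, (t ^ k * (k.factorial : ℂ)⁻¹) • (poisson G ^ k) A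
  have htail : expAd (t • G) A - T ∈ orderGE K := fun α β h => by
    simp [T, expAd_smul_apply hG A h, mul_assoc]
  have hzero : poisson G (expAd (t • G) A - T) α β = 0 :=
    poisson_mem_orderGE (k := K) hG htail (by omega) α β hK
  rw [map_sub, Pi.sub_apply, Pi.sub_apply, sub_eq_zero] at hzero
  simp [hzero, T, pow_succ', mul_assoc]

lemma hasCoeffDeriv_expAd {G : Coeffs} (hG : G ∈ orderGE 3) (A : Coeffs) :
    HasCoeffDeriv (fun t => expAd (t • G) A) fun t => poisson G (expAd (t • G) A) := by
  intro α β t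
  simp only [expAd_smul_apply hG A ((Nat.lt_succ_self (wt α + wt β)).trans (Nat.lt_succ_self _)),
    poisson_expAd_smul_apply hG A (Nat.lt_succ_self (wt α + wt β))]
  refine (HasDerivAt.fun_sum fun k _ => (hasDerivAt_pow k t).mul_const _).congr_deriv ?_
  rw [Finset.sum_range_succ', Nat.cast_zero, zero_mul, zero_mul, add_zero]
  refine Finset.sum_congr rfl fun k _ => ?_
  have hk : ((k : ℂ) + 1) ≠ 0 := Nat.cast_add_one_ne_zero k
  rw [Nat.factorial_succ]
  push_cast
  field_simp

lemma eq_expAd_of_hasCoeffDeriv {G : Coeffs} (hG : G ∈ orderGE 3) {Y : ℂ → Coeffs}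
    (hY : HasCoeffDeriv Y fun t => poisson G (Y t)) (t : ℂ) : Y t = expAd (t • G) (Y 0) := by
  refine sub_eq_zero.1 (eq_zero_of_hasCoeffDeriv_poisson hG
    (Y := fun t => Y t - expAd (t • G) (Y 0)) ?_ ?_ t)
  · simpa only [map_sub] using hY.sub (hasCoeffDeriv_expAd hG (Y 0))
  · rw [zero_smul, expAd_zero, sub_self]

lemma expAd_poisson {G : Coeffs} (hG : G ∈ orderGE 3) (A B : Coeffs) :
    expAd G (poisson A B) = poisson (expAd G A) (expAd G B) := by
  have hderiv : HasCoeffDeriv (fun t : ℂ => poisson (expAd (t • G) A) (expAd (t • G) B))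
      fun t => poisson G (poisson (expAd (t • G) A) (expAd (t • G) B)) := by
    simpa only [← poisson_leibniz] using
      (hasCoeffDeriv_expAd hG A).poisson (hasCoeffDeriv_expAd hG B)
  simpa [expAd_zero] using (eq_expAd_of_hasCoeffDeriv hG hderiv 1).symm

-- `t ↦ e^{(1 - t){G,·}} A` solves `Y' = {-G, Y}` and runs from `e^{{G,·}} A` to `A`.
lemma expAd_neg_expAd {G : Coeffs} (hG : G ∈ orderGE 3) (A : Coeffs) :
    expAd (-G) (expAd G A) = A := by
  have hderiv : HasCoeffDeriv (fun t : ℂ => expAd ((1 - t) • G) A)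
      fun t => poisson (-G) (expAd ((1 - t) • G) A) := fun α β t => by
    simpa using (hasCoeffDeriv_expAd hG A α β (1 - t)).comp_const_sub 1 t
  simpa [expAd_zero] using (eq_expAd_of_hasCoeffDeriv (neg_mem hG) hderiv 1).symm

lemma exists_primitive_expAd {G : Coeffs} (hG : G ∈ orderGE 3) (B : Coeffs) :
    ∃ U : ℂ → Coeffs, U 0 = 0 ∧ HasCoeffDeriv U fun t => expAd (t • G) B := by
  refine ⟨fun t α β => ∑ k ∈ Finset.range (wt α + wt β + 1),
    t ^ (k + 1) / (k + 1) * ((k.factorial : ℂ)⁻¹ * (poisson G ^ k) B α β), ?_, ?_⟩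
  · funext α β
    simp
  · intro α β t
    simp only [expAd_smul_apply hG B (Nat.lt_succ_self (wt α + wt β))]
    refine HasDerivAt.fun_sum fun k _ => HasDerivAt.mul_const ?_ _
    have hk : ((k : ℂ) + 1) ≠ 0 := Nat.cast_add_one_ne_zero k
    refine ((hasDerivAt_pow (k + 1) t).div_const _).congr_deriv ?_
    push_cast
    exact mul_div_cancel_left₀ _ hk

lemma exists_inhomogeneous_solution {G : Coeffs} (hG : G ∈ orderGE 3) (B : Coeffs) :
    ∃ U : ℂ → Coeffs, U 0 = 0 ∧ HasCoeffDeriv U fun t => B + poisson G (U t) := by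
  obtain ⟨U, hU₀, hU⟩ := exists_primitive_expAd hG B
  have hdiff : HasCoeffDeriv (fun t => expAd (t • G) B - poisson G (U t)) fun _ => 0 := by
    simpa using (hasCoeffDeriv_expAd hG B).sub ((HasCoeffDeriv.const G).poisson hU)
  have heq (t : ℂ) : expAd (t • G) B = B + poisson G (U t) := by
    have := eq_of_hasCoeffDeriv_zero hdiff t
    simp only [hU₀, map_zero, sub_zero, zero_smul, expAd_zero] at this
    exact sub_eq_iff_eq_add.1 this
  exact ⟨U, hU₀, by simpa only [heq] using hU⟩

/-! ### The Euler operator -/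

/-- The Euler operator `E`, normalised so that it is a derivation of the bracket: it multiplies
monomials of degree `n` by `n - 2`. -/
noncomputable def euler : Module.End ℂ Coeffs :=
  LinearMap.mulLeft ℂ fun α β => (wt α + wt β : ℂ) - 2

lemma euler_apply (A : Coeffs) (α β : Idx) :
    euler A α β = ((wt α + wt β : ℂ) - 2) * A α β := rfl

lemma euler_poisson (A B : Coeffs) :
    euler (poisson A B) = poisson (euler A) B + poisson A (euler B) := by
  funext α β
  simp only [euler_apply, Pi.add_apply, poisson_apply, ← mul_add, ← Finset.sum_add_distrib,
    mul_left_comm _ Complex.I, Finset.mul_sum]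
  refine Finset.sum_congr rfl fun x hx => ?_
  have hwt : ((wt x.2.1.1 + wt x.2.1.2) + (wt x.2.2.1 + wt x.2.2.2) : ℂ) =
      wt α + wt β + 2 := mod_cast (mem_contributions.1 hx).wt_add_wt
  linear_combination (-Complex.I * A x.2.1.1 x.2.1.2 * B x.2.2.1 x.2.2.2 *
    wedge x.1 x.2.1 x.2.2) * hwt

lemma HasCoeffDeriv.euler {Y Y' : ℂ → Coeffs} (hY : HasCoeffDeriv Y Y') :
    HasCoeffDeriv (fun t => euler (Y t)) fun t => euler (Y' t) :=
  fun α β t => (hY α β t).const_mul _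

lemma exists_euler_expAd {G : Coeffs} (hG : G ∈ orderGE 3) :
    ∃ W, ∀ A, euler (expAd G A) = expAd G (euler A) + poisson W (expAd G A) := by
  obtain ⟨U, hU₀, hU⟩ := exists_inhomogeneous_solution hG (euler G)
  refine ⟨U 1, fun A => ?_⟩
  have hderiv : HasCoeffDeriv
      (fun t => euler (expAd (t • G) A) - poisson (U t) (expAd (t • G) A))
      fun t => poisson G (euler (expAd (t • G) A) - poisson (U t) (expAd (t • G) A)) := by
    have hA := hasCoeffDeriv_expAd hG A
    convert hA.euler.sub (hU.poisson hA) using 2 with t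
    rw [euler_poisson, map_sub, poisson_leibniz G (U t), map_add, LinearMap.add_apply]
    abel
  have h := eq_expAd_of_hasCoeffDeriv hG hderiv 1
  simp only [one_smul, zero_smul, expAd_zero, hU₀, map_zero, LinearMap.zero_apply, sub_zero] at h
  exact sub_eq_iff_eq_add.1 h

/-! ### Formal symplectic maps -/

/-- The properties of a formal symplectic change of variables that the argument uses: it preserves
brackets, is the identity at lowest order, and commutes with the Euler operator up to an inner
derivation. -/
structure IsFormalSymplectic (Φ : Module.End ℂ Coeffs) : Prop where
  map_poisson : ∀ A B, Φ (poisson A B) = poisson (Φ A) (Φ B)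
  sub_self_mem : ∀ {n A}, A ∈ orderGE n → Φ A - A ∈ orderGE (n + 1)
  exists_euler : ∃ W, ∀ A, euler (Φ A) = Φ (euler A) + poisson W (Φ A)

lemma isFormalSymplectic_expEnd {G : Coeffs} (hG : G ∈ orderGE 3) :
    IsFormalSymplectic (expEnd hG) where
  map_poisson := expAd_poisson hG
  sub_self_mem := expAd_sub_self_mem_orderGE hG
  exists_euler := exists_euler_expAd hG

namespace IsFormalSymplectic

variable {Φ Ψ : Module.End ℂ Coeffs}

lemma map_mem_orderGE (hΦ : IsFormalSymplectic Φ) {n : ℕ} {A : Coeffs} (hA : A ∈ orderGE n) :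
    Φ A ∈ orderGE n := by
  rw [← sub_add_cancel (Φ A) A]
  exact add_mem (orderGE_antitone (Nat.le_succ n) (hΦ.sub_self_mem hA)) hA

lemma mul (hΦ : IsFormalSymplectic Φ) (hΨ : IsFormalSymplectic Ψ) :
    IsFormalSymplectic (Φ * Ψ) where
  map_poisson A B := by simp only [Module.End.mul_apply, hΨ.map_poisson, hΦ.map_poisson]
  sub_self_mem {n A} hA := by
    rw [Module.End.mul_apply, ← sub_add_sub_cancel _ (Ψ A) A]
    exact add_mem (hΦ.sub_self_mem (hΨ.map_mem_orderGE hA)) (hΨ.sub_self_mem hA)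
  exists_euler := by
    obtain ⟨V, hΦV⟩ := hΦ.exists_euler
    obtain ⟨W, hΨW⟩ := hΨ.exists_euler
    refine ⟨V + Φ W, fun A => ?_⟩
    simp only [Module.End.mul_apply, hΦV, hΨW, map_add, hΦ.map_poisson, LinearMap.add_apply]
    abel

end IsFormalSymplectic

/-- The part of a Hamiltonian that is homogeneous of degree `n`. -/
def homogeneousPart (n : ℕ) (A : Coeffs) : Coeffs := fun α β =>
  if wt α + wt β = n then A α β else 0

lemma homogeneousPart_mem_orderGE (n : ℕ) (A : Coeffs) : homogeneousPart n A ∈ orderGE n :=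
  fun _ _ h => if_neg h.ne

lemma sub_homogeneousPart_mem_orderGE {n : ℕ} {A : Coeffs} (hA : A ∈ orderGE n) :
    A - homogeneousPart n A ∈ orderGE (n + 1) := fun α β h => by
  rcases (Nat.lt_succ_iff.1 h).lt_or_eq with hlt | heq
  · simp [homogeneousPart, hlt.ne, hA α β hlt]
  · simp [homogeneousPart, heq]

lemma euler_homogeneousPart (n : ℕ) (A : Coeffs) :
    euler (homogeneousPart n A) = ((n : ℂ) - 2) • homogeneousPart n A := by
  funext α β
  by_cases h : wt α + wt β = n
  · simp [euler_apply, ← h]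
  · simp [euler_apply, homogeneousPart, h]

lemma apply_eq_zero_of_euler_eq_smul {A : Coeffs} {n : ℕ} (hA : euler A = ((n : ℂ) - 2) • A)
    {α β : Idx} (h : wt α + wt β ≠ n) : A α β = 0 := by
  have heq : ((wt α + wt β : ℂ) - 2) * A α β = ((n : ℂ) - 2) * A α β :=
    congrArg (fun F : Coeffs => F α β) hA
  have hne : (wt α + wt β : ℂ) - 2 ≠ (n : ℂ) - 2 := mt sub_left_inj.1 (mod_cast h)
  exact (mul_eq_mul_right_iff.1 heq).resolve_left hne

lemma map_homogeneousPart_eq_self {Φ : Module.End ℂ Coeffs} {n : ℕ} {A : Coeffs}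
    (hunip : ∀ {n A}, A ∈ orderGE n → Φ A - A ∈ orderGE (n + 1))
    (heuler : euler (Φ (homogeneousPart n A)) = Φ (euler (homogeneousPart n A))) :
    Φ (homogeneousPart n A) = homogeneousPart n A := by
  rw [euler_homogeneousPart, map_smul] at heuler
  funext α β
  by_cases h : wt α + wt β = n
  · exact sub_eq_zero.1 (hunip (homogeneousPart_mem_orderGE n A) α β (by omega))
  · rw [apply_eq_zero_of_euler_eq_smul heuler h, homogeneousPart, if_neg h]

lemma eq_self_of_commute_euler {Φ : Module.End ℂ Coeffs} {V : Submodule ℂ Coeffs}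
    (hunip : ∀ {n A}, A ∈ orderGE n → Φ A - A ∈ orderGE (n + 1))
    (hpart : ∀ {n A}, A ∈ V → homogeneousPart n A ∈ V)
    (heuler : ∀ A ∈ V, euler (Φ A) = Φ (euler A)) {A : Coeffs} (hA : A ∈ V) : Φ A = A := by
  suffices h : ∀ k n B, B ∈ V → B ∈ orderGE n → Φ B - B ∈ orderGE (n + k) from
    sub_eq_zero.1 <| eq_zero_of_forall_mem_orderGE fun k => by
      simpa using h k 0 A hA (mem_orderGE_zero A)
  intro k
  induction k with
  | zero => exact fun n B _ hB => orderGE_antitone (Nat.le_succ n) (hunip hB)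
  | succ k ih =>
    intro n B hBV hB
    have hfix := map_homogeneousPart_eq_self hunip (heuler _ (hpart (n := n) hBV))
    have hrest := ih (n + 1) _ (sub_mem hBV (hpart hBV)) (sub_homogeneousPart_mem_orderGE hB)
    rwa [map_sub, hfix, sub_sub_sub_cancel_right, Nat.succ_add_eq_add_succ] at hrest

/-! ### Diagonal Hamiltonians -/

/-- The Hamiltonians whose momentum-preserving monomials are all of the form `u^α ū^α`. Monomials
that violate momentum conservation are unrestricted because the bracket ignores them. -/
def diagonal : Submodule ℂ Coeffs where
  carrier := {H | ∀ α β, mom α β = 0 → α ≠ β → H α β = 0}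
  add_mem' hF hG α β h hne := by simp [hF α β h hne, hG α β h hne]
  zero_mem' _ _ _ _ := rfl
  smul_mem' c F hF α β h hne := by simp [hF α β h hne]

lemma euler_mem_diagonal {A : Coeffs} (hA : A ∈ diagonal) : euler A ∈ diagonal :=
  fun α β hmom hne => by rw [euler_apply, hA α β hmom hne, mul_zero]

lemma homogeneousPart_mem_diagonal {n : ℕ} {A : Coeffs} (hA : A ∈ diagonal) :
    homogeneousPart n A ∈ diagonal := fun α β hmom hne => by
  rw [homogeneousPart, hA α β hmom hne, ite_self]

lemma poisson_eq_zero_of_mem_diagonal {A B : Coeffs} (hA : A ∈ diagonal) (hB : B ∈ diagonal) :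
    poisson A B = 0 := by
  funext α β
  refine poisson_apply_eq_zero fun j p q h => ?_
  by_cases hp : p.1 = p.2
  · exact Or.inr (hB _ _ h.mom_right fun hq => h.wedge_ne_zero (wedge_eq_zero_of_diagonal j hp hq))
  · exact Or.inl (hA _ _ h.mom_left hp)

lemma exists_eq_unitPair_of_dom_ne_zero {ω : ℤ → ℝ} {α β : Idx} (h : Dom ω α β ≠ 0) :
    ∃ j, (α, β) = unitPair j := by
  contrapose! h
  exact finsum_eq_zero_of_forall_eq_zero fun j => if_neg fun hj => h j (Prod.ext hj.1 hj.2)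

lemma dom_single (ω : ℤ → ℝ) (j : ℤ) :
    Dom ω (Finsupp.single j 1) (Finsupp.single j 1) = ω j := by
  rw [Dom, finsum_eq_single _ j fun k hk => ?_]
  · simp
  · simp [Finsupp.single_left_inj, hk.symm]

lemma dom_mem_diagonal (ω : ℤ → ℝ) : Dom ω ∈ diagonal := fun α β _ hne => by
  contrapose! hne
  obtain ⟨j, hj⟩ := exists_eq_unitPair_of_dom_ne_zero hne
  exact (congrArg Prod.fst hj).trans (congrArg Prod.snd hj).symm

lemma dom_mem_orderGE (ω : ℤ → ℝ) : Dom ω ∈ orderGE 2 := fun α β h => by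
  contrapose! h
  obtain ⟨j, hj⟩ := exists_eq_unitPair_of_dom_ne_zero h
  obtain ⟨rfl, rfl⟩ : α = Finsupp.single j 1 ∧ β = Finsupp.single j 1 := Prod.ext_iff.1 hj
  simp [wt_single]

/-- The small divisor `∑_j ω_j (β_j - α_j)`. -/
noncomputable def divisor (ω : ℤ → ℝ) (α β : Idx) : ℝ :=
  ∑ j ∈ α.support ∪ β.support, ω j * (β j - α j)

lemma divisor_ne_zero {ω : ℤ → ℝ} (hω : NonResonant ω) {α β : Idx} (h : α ≠ β) :
    divisor ω α β ≠ 0 := by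
  set ℓ : ℤ →₀ ℤ := β.mapRange Nat.cast Nat.cast_zero - α.mapRange Nat.cast Nat.cast_zero with hℓ
  have hℓ_apply (j : ℤ) : ℓ j = (β j : ℤ) - α j := by simp [hℓ]
  have hne : ℓ ≠ 0 := fun h₀ => h <| Finsupp.ext fun j => by
    have := hℓ_apply j
    rw [h₀, Finsupp.coe_zero, Pi.zero_apply] at this
    omega
  have hsupp : ℓ.support ⊆ α.support ∪ β.support := fun j hj => by
    contrapose! hj
    simp_all
  convert hω ℓ hne using 1
  rw [divisor, Finsupp.sum_of_support_subset _ hsupp _ (by simp)]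
  simp [hℓ_apply]

lemma poisson_dom_apply (ω : ℤ → ℝ) (M : Coeffs) {α β : Idx} (h : mom α β = 0) :
    poisson (Dom ω) M α β = Complex.I * divisor ω α β * M α β := by
  have hterm (j : ℤ) : bracketTerm (Dom ω) M α β (j, unitPair j, (α, β)) =
      ω j * (β j - α j) * M α β := by
    rw [bracketTerm, if_pos ⟨mom_self _, h, (add_tsub_cancel_left _ _).symm,
      (add_tsub_cancel_left _ _).symm⟩]
    simp [unitPair, dom_single]
    ring
  have hinj : Function.Injective fun j : ℤ => (j, unitPair j, (α, β)) :=
    fun _ _ h => congrArg Prod.fst h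
  have hsupp : Function.support (bracketTerm (Dom ω) M α β) ⊆
      (α.support ∪ β.support).image fun j => (j, unitPair j, (α, β)) := by
    rintro ⟨j, p, q⟩ hx
    have hc := contributes_of_bracketTerm_ne_zero hx
    rw [Function.mem_support, hc.bracketTerm_eq] at hx
    obtain ⟨k, rfl : p = unitPair k⟩ :=
      exists_eq_unitPair_of_dom_ne_zero (left_ne_zero_of_mul (left_ne_zero_of_mul hx))
    obtain rfl : j = k := by
      by_contra hjk
      refine hc.wedge_ne_zero ?_
      rw [wedge_swap, wedge_unitPair_of_ne (Ne.symm hjk), neg_zero]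
    obtain rfl : q = (α, β) := add_left_cancel (hc.add_eq.trans (add_comm _ _))
    exact Finset.mem_coe.2 (Finset.mem_image_of_mem _
      (mem_support_of_wedge_ne_zero hc.swap.wedge_ne_zero))
  change bracket _ _ α β = _
  rw [bracket, finsum_eq_sum_of_support_subset _ hsupp, Finset.sum_image hinj.injOn, divisor]
  simp only [hterm, ← Finset.sum_mul]
  push_cast
  ring

lemma mem_diagonal_of_poisson_mem_diagonal {ω : ℤ → ℝ} (hω : NonResonant ω) {K M : Coeffs}
    (hK : K ∈ diagonal) (hK₃ : K - Dom ω ∈ orderGE 3) (hM : poisson K M ∈ diagonal) :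
    M ∈ diagonal := by
  intro α β hmom hne
  induction hn : wt α + wt β using Nat.strong_induction_on generalizing α β with
  | _ n ih =>
  have hremainder : poisson (K - Dom ω) M α β = 0 := by
    refine poisson_apply_eq_zero fun j p q h => ?_
    by_cases hp : p.1 = p.2; swap
    · exact Or.inl (sub_mem hK (dom_mem_diagonal ω) _ _ h.mom_left hp)
    rcases lt_or_ge (wt p.1 + wt p.2) 3 with hlt | hge
    · exact Or.inl (hK₃ _ _ hlt)
    · have hwt := h.wt_add_wt
      dsimp only at hwt
      exact Or.inr (ih _ (by omega) _ _ h.mom_right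
        (fun hq => h.wedge_ne_zero (wedge_eq_zero_of_diagonal j hp hq)) rfl)
  have hDom : poisson (Dom ω) M α β = 0 := by
    rw [map_sub, LinearMap.sub_apply, Pi.sub_apply, Pi.sub_apply, hM α β hmom hne] at hremainder
    simpa using hremainder
  rw [poisson_dom_apply ω M hmom] at hDom
  exact (mul_eq_zero.1 hDom).resolve_left
    (mul_ne_zero Complex.I_ne_zero (Complex.ofReal_ne_zero.2 (divisor_ne_zero hω hne)))

lemma IsFormalSymplectic.eq_self_of_mem_diagonal {Φ : Module.End ℂ Coeffs}
    (hΦ : IsFormalSymplectic Φ) {ω : ℤ → ℝ} (hω : NonResonant ω) {N : Coeffs}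
    (hN : N ∈ diagonal) (hΦN : Φ N ∈ diagonal) (hΦN₃ : Φ N - Dom ω ∈ orderGE 3)
    {A : Coeffs} (hA : A ∈ diagonal) : Φ A = A := by
  have hmap {B : Coeffs} (hB : B ∈ diagonal) : Φ B ∈ diagonal := by
    refine mem_diagonal_of_poisson_mem_diagonal hω hΦN hΦN₃ ?_
    rw [← hΦ.map_poisson, poisson_eq_zero_of_mem_diagonal hN hB, map_zero]
    exact zero_mem _
  obtain ⟨W, hW⟩ := hΦ.exists_euler
  have hWdiag : W ∈ diagonal := by
    refine mem_diagonal_of_poisson_mem_diagonal hω hΦN hΦN₃ ?_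
    rw [poisson_swap, ← sub_eq_iff_eq_add'.2 (hW N)]
    exact neg_mem (sub_mem (euler_mem_diagonal (hmap hN)) (hmap (euler_mem_diagonal hN)))
  refine eq_self_of_commute_euler hΦ.sub_self_mem homogeneousPart_mem_diagonal (fun B hB => ?_) hA
  rw [hW, poisson_eq_zero_of_mem_diagonal hWdiag (hmap hB), add_zero]

lemma mem_diagonal_of_inK {H : Coeffs} (hH : InK H) : H ∈ diagonal := fun α β _ hne => hH.2 α β hne

lemma mem_orderGE_three_of_inFge {d : ℕ} (hd : 1 ≤ d) {H : Coeffs} (hH : InFge d H) :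
    H ∈ orderGE 3 :=
  orderGE_antitone (Nat.add_le_add_right hd 2) hH.2

end BirkhoffNormalForm

open BirkhoffNormalForm

theorem birkhoff_normal_form_unique_general {ω : ℤ → ℝ} (hω : NonResonant ω) {H G S : Coeffs}
    (hH : H - Dom ω ∈ orderGE 3) (hG : G ∈ orderGE 3) (hS : S ∈ orderGE 3)
    (hGnf : expAd G H ∈ diagonal) (hSnf : expAd S H ∈ diagonal) :
    expAd G H = expAd S H := by
  have hΦ : IsFormalSymplectic (expEnd hG * expEnd (neg_mem hS)) :=
    (isFormalSymplectic_expEnd hG).mul (isFormalSymplectic_expEnd (neg_mem hS))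
  have hΦN : (expEnd hG * expEnd (neg_mem hS)) (expAd S H) = expAd G H := by
    rw [Module.End.mul_apply, expEnd_apply, expEnd_apply, expAd_neg_expAd hS]
  have hH₂ : H ∈ orderGE 2 := by
    simpa only [sub_add_cancel] using
      add_mem (orderGE_antitone (Nat.le_succ 2) hH) (dom_mem_orderGE ω)
  have hGnf₃ : expAd G H - Dom ω ∈ orderGE 3 := by
    simpa only [sub_add_sub_cancel] using add_mem (expAd_sub_self_mem_orderGE hG hH₂) hH
  rw [← hΦN] at hGnf hGnf₃ ⊢
  exact hΦ.eq_self_of_mem_diagonal hω hSnf hGnf hGnf₃ hSnf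

/-- formal Birkhoff normal form, uniqueness: with `H = D_ω +
Z + R` as in the existence statement and `S ∈ 𝓕^{≥d}` normalizing `H`, any
`G ∈ 𝓕^{≥1}` with `e^{{G,·}} H − D_ω ∈ 𝓚` produces the same normal form:
`e^{{G,·}} H = e^{{S,·}} H`. -/
theorem birkhoff_normal_form_unique (ω : ℤ → ℝ) (hω : NonResonant ω)
    (d : ℕ) (hd : 1 ≤ d) (Z R S G Ztil : Coeffs)
    (hZK : InK Z) (hZ2 : InFge 2 Z) (hR : InFge d R)
    (hS : InFge d S) (hSnf : expAd S (Dom ω + Z + R) = Dom ω + Ztil)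
    (hZtil : InK Ztil)
    (hG : InFge 1 G) (hGnf : InK (expAd G (Dom ω + Z + R) - Dom ω)) :
    expAd G (Dom ω + Z + R) = expAd S (Dom ω + Z + R) := by
  have hH : Dom ω + Z + R - Dom ω ∈ orderGE 3 := by
    simpa only [add_assoc, add_sub_cancel_left] using
      add_mem (mem_orderGE_three_of_inFge one_le_two hZ2) (mem_orderGE_three_of_inFge hd hR)
  exact birkhoff_normal_form_unique_general hω hH (mem_orderGE_three_of_inFge le_rfl hG)
    (mem_orderGE_three_of_inFge hd hS)
    ((diagonal.sub_mem_iff_left (dom_mem_diagonal ω)).1 (mem_diagonal_of_inK hGnf))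
    (hSnf ▸ add_mem (dom_mem_diagonal ω) (mem_diagonal_of_inK hZtil))
end
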